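/- Let n ≥ 2 and let β ≥ 0 and α be real numbers such that either (n−3)/2 < β < (n−1)/2 and α < 2β − (n−3)/2, or β ≥ (n−1)/2 and α < β + 1. Then there is a constant C (depending on n, α, β and χ) such that for every Schwartz function q on ℝⁿ, the function G(η) := χ(η) ( iπ S₁(q)(η) + P(S_·(q))(η) ), where P(S_·(q))(η) := lim_{ε→0⁺} ∫_{{r>0 : |1−r|>ε}} S_r(q)(η)/(1−r) dr, is well defined for η ≠ 0 and satisfies ‖ ⟨·⟩^α G ‖_{L²(ℝⁿ)} ≤ C ‖q‖²_{W^{β,2}_2}. (This is the Sobolev bound for the double dispersion operator of backscattering: the Fourier transform of Q̃₂(q) equals G, so ‖Q̃₂(q)‖_{W^{α,2}} ≤ C‖q‖²_{W^{β,2}_2}.) -/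

import Mathlib

open MeasureTheory Filter Set
open scoped ENNReal RealInnerProductSpace

noncomputable section

abbrev Euc (n : ℕ) := EuclideanSpace ℝ (Fin n)

/-- The Japanese bracket `⟨x⟩ = (1+|x|²)^{1/2}`. -/
def jap {n : ℕ} (x : Euc n) : ℝ := Real.sqrt (1 + ‖x‖ ^ 2)

/-- The Ewald sphere measure `σ_{rη}`: the `(n-1)`-dimensional Hausdorff measure restricted
to `Γ_r(η) = {ξ : |ξ - η/2| = r|η|/2}`. -/
def ewaldM (n : ℕ) (r : ℝ) (η : Euc n) : Measure (Euc n) :=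
  (MeasureTheory.Measure.hausdorffMeasure ((n : ℝ) - 1)).restrict
    (Metric.sphere ((2 : ℝ)⁻¹ • η) (r * ‖η‖ / 2))

/-- The Fourier transform `f̂(ξ) = ∫ e^{-iξ·x} f(x) dx`. -/
def ft {n : ℕ} (f : Euc n → ℂ) (ξ : Euc n) : ℂ :=
  ∫ x : Euc n, Complex.exp (-Complex.I * ((⟪ξ, x⟫ : ℝ) : ℂ)) * f x

/-- `⟨D⟩^β f`: inverse Fourier transform of `⟨ξ⟩^β f̂(ξ)`. -/
def besselD {n : ℕ} (β : ℝ) (f : Euc n → ℂ) (x : Euc n) : ℂ :=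
  (((2 * Real.pi) ^ n : ℝ)⁻¹ : ℝ) •
    ∫ ξ : Euc n, Complex.exp (Complex.I * ((⟪ξ, x⟫ : ℝ) : ℂ)) *
      (((jap ξ ^ β : ℝ) : ℂ) * ft f ξ)

/-- The weighted Sobolev norm `‖f‖_{W^{β,2}_δ} = ‖⟨·⟩^δ ⟨D⟩^β f‖_{L²}`. -/
def wSobNorm {n : ℕ} (β δ : ℝ) (f : Euc n → ℂ) : ℝ≥0∞ :=
  eLpNorm (fun x : Euc n => (jap x ^ δ : ℝ) • besselD β f x) 2 volume

/-- The spherical operator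
`S_r(q)(η) = (2/(|η|(1+r))) ∫_{Γ_r(η)} q̂(ξ) q̂(η-ξ) dσ_{rη}(ξ)`. -/
def Sr {n : ℕ} (r : ℝ) (q : Euc n → ℂ) (η : Euc n) : ℂ :=
  ((2 / (‖η‖ * (1 + r))) : ℝ) • ∫ ξ, ft q ξ * ft q (η - ξ) ∂(ewaldM n r η)

/-- `K_r(g₁,g₂)(η) = (1/|η|) ∫_{Γ_r(η)} |g₁(ξ)||g₂(η-ξ)| dσ_{rη}(ξ)`. -/
def Kr {n : ℕ} (r : ℝ) (g₁ g₂ : Euc n → ℂ) (η : Euc n) : ℝ :=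
  ‖η‖⁻¹ * ∫ ξ, ‖g₁ ξ‖ * ‖g₂ (η - ξ)‖ ∂(ewaldM n r η)

/-!
On the Ewald sphere `Γ_r(η)` write `ξ = η/2 + r (‖η‖/2) θ`. Then `S_r(q)(η)` is an explicit weight
in `r` times an average over `θ` of the radial function `φ_θ(r) = q̂(ξ) q̂(η - ξ)`, and `ξ` runs
through `ℝⁿ` in polar coordinates around `η/2`. Splitting the principal value at distance of order
`1/N` from `r = 1`, with `N = max 1 ‖η‖`, and bounding `φ_θ` and `φ_θ'` near `r = 1` by averages,
at that scale, of `φ_θ` and its first two derivatives shows, for `‖η‖ ≥ 1`,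
`|iπ S₁ + P| ≤ C ‖η‖⁻¹ ∫ (1 + |‖ξ - η/2‖ - ‖η‖/2|)⁻¹ m(ξ) m(η - ξ) dξ`,
where `m` majorizes `q̂` and its derivatives up to order two along lines. The weight `⟨x⟩²` in the
norm of `q` pays for such a majorant `m = ⟨ξ⟩^{-β} E` with `‖E‖_{L²} ≲ ‖q‖_{W^{β,2}_2}`.

One of `⟨ξ⟩`, `⟨η - ξ⟩` is at least `⟨η⟩/2`, so by symmetry and Cauchy–Schwarz the claim reduces to
the `L²` norm of `ξ ↦ (1 + |‖ξ - η/2‖ - ‖η‖/2|)⁻¹ ⟨ξ⟩^{-β}` near the Ewald sphere. Away from the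
origin it is computed by integrating over spherical shells; near the origin, where `⟨ξ⟩^{-β}` is
large, by integrating along the lines parallel to `η`, which cross the sphere transversally.
-/

open Metric Module
open scoped NNReal Pointwise FourierTransform SchwartzMap LineDeriv Topology

theorem exists_countable_pairwiseDisjoint_closedBall_subset_isOpen {X : Type*} [MetricSpace X]
    [SecondCountableTopology X] {U : Set X} (hU : IsOpen U) {δ : ℝ} (hδ : 0 < δ) :
    ∃ u : Set (X × ℝ), u.Countable ∧
      (∀ a ∈ u, 0 < a.2 ∧ a.2 ≤ δ ∧ closedBall a.1 a.2 ⊆ U) ∧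
      (u.PairwiseDisjoint fun a ↦ closedBall a.1 a.2) ∧
      U ⊆ ⋃ a : u, closedBall a.1.1 (5 * a.1.2) := by
  obtain ⟨u, hut, hdisj, hu⟩ := Vitali.exists_disjoint_subfamily_covering_enlargement_closedBall
    {a : X × ℝ | 0 < a.2 ∧ a.2 ≤ δ ∧ closedBall a.1 a.2 ⊆ U}
    Prod.fst Prod.snd δ (fun a ha ↦ ha.2.1) 5 (by norm_num)
  refine ⟨u, hdisj.countable_of_nonempty_interior fun a ha ↦ ?_, hut, hdisj, fun x hx ↦ ?_⟩
  · exact ⟨a.1, ball_subset_interior_closedBall (mem_ball_self (hut ha).1)⟩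
  · obtain ⟨ε, hε, hεU⟩ := nhds_basis_closedBall.mem_iff.1 (hU.mem_nhds hx)
    have hr : 0 < min ε δ := by positivity
    obtain ⟨b, hb, hsub⟩ := hu (x, min ε δ)
      ⟨hr, min_le_right _ _, (closedBall_subset_closedBall (min_le_left _ _)).trans hεU⟩
    exact mem_iUnion.2 ⟨⟨b, hb⟩, hsub (mem_closedBall_self hr.le)⟩

theorem ediam_closedBall_le_ofReal {X : Type*} [PseudoMetricSpace X] (x : X) {r : ℝ}
    (hr : 0 ≤ r) : ediam (closedBall x r) ≤ ENNReal.ofReal (2 * r) := by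
  rw [← closedEBall_ofReal hr, ENNReal.ofReal_mul zero_le_two, ENNReal.ofReal_ofNat]
  exact ediam_closedEBall_le

theorem hausdorffMeasure_isOpen_le_of_le_measure_closedBall {X : Type*} [MetricSpace X]
    [MeasurableSpace X] [BorelSpace X] [SecondCountableTopology X] {μ : Measure X} {s : ℝ}
    (hs : 0 ≤ s) {c : ℝ≥0∞} (hc : c ≠ 0) (hc' : c ≠ ∞)
    (hball : ∀ (x : X) (r : ℝ), 0 < r → r ≤ 1 → c * ENNReal.ofReal r ^ s ≤ μ (closedBall x r))
    {U : Set X} (hU : IsOpen U) :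
    Measure.hausdorffMeasure s U ≤ 10 ^ s / c * μ U := by
  choose u hcount hu hdisj hUu using fun k : ℕ ↦
    exists_countable_pairwiseDisjoint_closedBall_subset_isOpen hU (Nat.one_div_pos_of_nat (n := k))
  have (k : ℕ) : Countable (u k) := (hcount k).to_subtype
  have hlim : Tendsto (fun k : ℕ ↦ ENNReal.ofReal (10 * (1 / ((k : ℝ) + 1)))) atTop (𝓝 0) := by
    simpa using ENNReal.tendsto_ofReal (tendsto_one_div_add_atTop_nhds_zero_nat.const_mul (10 : ℝ))
  have hdiam (k : ℕ) (a : u k) :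
      ediam (closedBall a.1.1 (5 * a.1.2)) ≤ ENNReal.ofReal (10 * a.1.2) := by
    refine (ediam_closedBall_le_ofReal _ (by linarith [(hu k a a.2).1])).trans_eq ?_
    ring_nf
  have hsum (k : ℕ) : ∑' a : u k, ediam (closedBall a.1.1 (5 * a.1.2)) ^ s ≤
      10 ^ s / c * μ U := calc
    _ ≤ ∑' a : u k, 10 ^ s / c * μ (closedBall a.1.1 a.1.2) := by
      refine ENNReal.tsum_le_tsum fun a ↦ ?_
      obtain ⟨h0, h1, -⟩ := hu k a a.2
      have h1' : a.1.2 ≤ 1 := h1.trans ((div_le_one (by positivity)).2 (by simp))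
      calc _ ≤ ENNReal.ofReal (10 * a.1.2) ^ s := by gcongr; exact hdiam k a
        _ = 10 ^ s / c * (c * ENNReal.ofReal a.1.2 ^ s) := by
          rw [ENNReal.ofReal_mul (by norm_num), ENNReal.mul_rpow_of_nonneg _ _ hs, ← mul_assoc,
            ENNReal.div_mul_cancel hc hc']
          simp
        _ ≤ _ := by gcongr; exact hball _ _ h0 h1'
    _ = 10 ^ s / c * μ (⋃ a ∈ u k, closedBall a.1 a.2) := by
      rw [ENNReal.tsum_mul_left, measure_biUnion (hcount k) (hdisj k)
        fun _ _ ↦ isClosed_closedBall.measurableSet]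
    _ ≤ _ := by gcongr; exact iUnion₂_subset fun a ha ↦ (hu k a ha).2.2
  calc
    _ ≤ liminf (fun k ↦ ∑' a : u k, ediam (closedBall a.1.1 (5 * a.1.2)) ^ s) atTop :=
      Measure.hausdorffMeasure_le_liminf_tsum s U _ hlim (fun k (a : u k) ↦ _)
        (.of_forall fun k a ↦ (hdiam k a).trans (by gcongr; exact (hu k a a.2).2.1))
        (.of_forall hUu)
    _ ≤ liminf (fun _ : ℕ ↦ 10 ^ s / c * μ U) atTop := liminf_le_liminf (.of_forall hsum)
    _ = _ := liminf_const _

theorem hausdorffMeasure_le_smul_of_le_measure_closedBall {X : Type*} [MetricSpace X]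
    [MeasurableSpace X] [BorelSpace X] [SecondCountableTopology X] {μ : Measure X}
    [μ.OuterRegular] {s : ℝ} (hs : 0 ≤ s) {c : ℝ≥0∞} (hc : c ≠ 0) (hc' : c ≠ ∞)
    (hball : ∀ (x : X) (r : ℝ), 0 < r → r ≤ 1 → c * ENNReal.ofReal r ^ s ≤ μ (closedBall x r)) :
    Measure.hausdorffMeasure s ≤ (10 ^ s / c) • μ := by
  have hK : 10 ^ s / c ≠ ∞ := ENNReal.div_ne_top (by simp) hc
  have := Measure.OuterRegular.smul μ hK
  refine Measure.le_intro fun A _ _ ↦ ?_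
  rw [A.measure_eq_iInf_isOpen ((10 ^ s / c) • μ)]
  refine le_iInf₂ fun U hAU ↦ le_iInf fun hU ↦ (measure_mono hAU).trans ?_
  exact hausdorffMeasure_isOpen_le_of_le_measure_closedBall hs hc hc' hball hU

section Polar

/-- The surface measure of the unit sphere of `E`: its Hausdorff measure of codimension one. -/
def sphereMeasure (E : Type*) [NormedAddCommGroup E] [NormedSpace ℝ E] [MeasurableSpace E]
    [BorelSpace E] : Measure (sphere (0 : E) 1) :=
  Measure.hausdorffMeasure ((finrank ℝ E : ℝ) - 1)

variable {E : Type*} [NormedAddCommGroup E] [NormedSpace ℝ E] [FiniteDimensional ℝ E]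
  [Nontrivial E] [MeasurableSpace E] [BorelSpace E] (μ : Measure E) [μ.IsAddHaarMeasure]

theorem lintegral_toSphere_lintegral_Ioi {g : E → ℝ≥0∞} (hg : Measurable g) :
    ∫⁻ θ : sphere (0 : E) 1, (∫⁻ r in Ioi (0 : ℝ),
      ENNReal.ofReal (r ^ (finrank ℝ E - 1)) * g (r • (θ : E))) ∂μ.toSphere = ∫⁻ x, g x ∂μ := by
  let e := (homeomorphUnitSphereProd E).toMeasurableEquiv
  have hge : Measurable fun x ↦ g (e.symm x) :=
    hg.comp (measurable_subtype_coe.comp e.symm.measurable)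
  have hpres : MeasurePreserving e.symm _ _ :=
    μ.measurePreserving_homeomorphUnitSphereProd.symm (e := e)
  calc
    _ = ∫⁻ θ, (∫⁻ r, g (e.symm (θ, r)) ∂Measure.volumeIoiPow (finrank ℝ E - 1)) ∂μ.toSphere := by
      refine lintegral_congr fun θ ↦ ?_
      rw [Measure.volumeIoiPow, lintegral_withDensity_eq_lintegral_mul _ (by fun_prop)
        (g := fun r ↦ g (e.symm (θ, r))) (hge.comp measurable_prodMk_left),
        ← lintegral_subtype_comap measurableSet_Ioi]
      rfl
    _ = ∫⁻ x : ({0}ᶜ : Set E), g x ∂μ.comap Subtype.val := by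
      rw [← lintegral_prod _ hge.aemeasurable,
        ← hpres.lintegral_comp (f := fun x ↦ g x) (hg.comp measurable_subtype_coe)]
    _ = ∫⁻ x, g x ∂μ := by
      rw [lintegral_subtype_comap (measurableSet_singleton _).compl, restrict_compl_singleton]

theorem lintegral_closedBall_comp_norm_le {f : ℝ → ℝ≥0∞} (hf : Measurable f) (R : ℝ) :
    ∫⁻ x in closedBall (0 : E) R, f ‖x‖ ∂μ ≤
      ENNReal.ofReal (R ^ (finrank ℝ E - 1)) * μ.toSphere univ * ∫⁻ r, f r := by
  have hθ (θ : sphere (0 : E) 1) : ∫⁻ r in Ioi (0 : ℝ), ENNReal.ofReal (r ^ (finrank ℝ E - 1)) *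
      (closedBall (0 : E) R).indicator (fun x ↦ f ‖x‖) (r • (θ : E)) ≤
        ENNReal.ofReal (R ^ (finrank ℝ E - 1)) * ∫⁻ r, f r := by
    rw [← lintegral_const_mul' _ _ ENNReal.ofReal_ne_top]
    refine (setLIntegral_mono' measurableSet_Ioi fun r (hr : 0 < r) ↦ ?_).trans
      (setLIntegral_le_lintegral _ _)
    have hnorm : ‖r • (θ : E)‖ = r := by simp [norm_smul, abs_of_pos hr]
    by_cases hrR : r ≤ R
    · rw [indicator_of_mem (by simpa [hnorm] using hrR), hnorm]
      gcongr
    · rw [indicator_of_notMem (by simpa [hnorm] using hrR), mul_zero]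
      exact zero_le
  calc
    _ = ∫⁻ x, (closedBall (0 : E) R).indicator (fun x ↦ f ‖x‖) x ∂μ :=
      (lintegral_indicator isClosed_closedBall.measurableSet _).symm
    _ ≤ ∫⁻ _ : sphere (0 : E) 1,
        (ENNReal.ofReal (R ^ (finrank ℝ E - 1)) * ∫⁻ r, f r) ∂μ.toSphere := by
      rw [← lintegral_toSphere_lintegral_Ioi μ (g := (closedBall 0 R).indicator fun x ↦ f ‖x‖)
        ((hf.comp measurable_norm).indicator isClosed_closedBall.measurableSet)]
      exact lintegral_mono hθ
    _ = _ := by rw [lintegral_const]; ring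

theorem abs_sub_one_lt_and_mem_ball_of_smul_mem_ball {V : Type*} [NormedAddCommGroup V]
    [NormedSpace ℝ V] {x θ : sphere (0 : V) 1} {r δ : ℝ} (hr : 0 < r)
    (h : r • (θ : V) ∈ ball (x : V) δ) : |r - 1| < δ ∧ θ ∈ ball x (2 * δ) := by
  have hr1 : |r - 1| < δ := by
    have := abs_norm_sub_norm_le (r • (θ : V)) x
    rw [norm_smul, Real.norm_of_nonneg hr.le] at this
    simp only [norm_eq_of_mem_sphere, mul_one] at this
    exact this.trans_lt (mem_ball_iff_norm.1 h)
  have hθr : dist (θ : V) (r • (θ : V)) = |r - 1| := by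
    rw [dist_comm, dist_eq_norm, show r • (θ : V) - θ = (r - 1) • (θ : V) by module, norm_smul]
    simp
  refine ⟨hr1, ?_⟩
  rw [mem_ball, Subtype.dist_eq]
  linarith [dist_triangle (θ : V) (r • (θ : V)) x, mem_ball.1 h]

theorem measure_ball_le_toSphere_ball (x : sphere (0 : E) 1) {δ : ℝ} (hδ : δ ≤ 1) :
    μ (ball (x : E) δ) ≤ ENNReal.ofReal (2 ^ finrank ℝ E * δ) * μ.toSphere (ball x (2 * δ)) := by
  set d := finrank ℝ E
  have hd1 : d = d - 1 + 1 := by have : 0 < d := finrank_pos; omega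
  have hradial (θ : sphere (0 : E) 1) : ∫⁻ r in Ioi (0 : ℝ), ENNReal.ofReal (r ^ (d - 1)) *
      (ball (x : E) δ).indicator 1 (r • (θ : E)) ≤
        (ball x (2 * δ)).indicator (fun _ ↦ ENNReal.ofReal (2 ^ d * δ)) θ := by
    have hsupp {r : ℝ} (hr : 0 < r) : ENNReal.ofReal (r ^ (d - 1)) *
        (ball (x : E) δ).indicator 1 (r • (θ : E)) ≤
          (ball x (2 * δ)).indicator (fun _ ↦
            (ball (1 : ℝ) δ).indicator (fun _ ↦ ENNReal.ofReal (2 ^ (d - 1))) r) θ := by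
      by_cases h : r • (θ : E) ∈ ball (x : E) δ
      · obtain ⟨hr1, hθ⟩ := abs_sub_one_lt_and_mem_ball_of_smul_mem_ball hr h
        rw [indicator_of_mem h, indicator_of_mem hθ, indicator_of_mem (by simpa [Real.dist_eq])]
        simp only [Pi.one_apply, mul_one]
        gcongr
        linarith [(abs_lt.1 hr1).2]
      · simp [indicator_of_notMem h]
    refine (setLIntegral_mono' measurableSet_Ioi fun r hr ↦ hsupp hr).trans
      ((setLIntegral_le_lintegral _ _).trans_eq ?_)
    by_cases hθ : θ ∈ ball x (2 * δ)
    · simp only [indicator_of_mem hθ]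
      rw [lintegral_indicator_const measurableSet_ball, Real.volume_ball,
        ← ENNReal.ofReal_mul (by positivity), hd1, pow_succ, Nat.add_sub_cancel]
      ring_nf
    · simp [indicator_of_notMem hθ]
  calc
    _ = ∫⁻ y, (ball (x : E) δ).indicator 1 y ∂μ := (lintegral_indicator_one measurableSet_ball).symm
    _ ≤ ∫⁻ θ, (ball x (2 * δ)).indicator (fun _ ↦ ENNReal.ofReal (2 ^ d * δ)) θ ∂μ.toSphere := by
      rw [← lintegral_toSphere_lintegral_Ioi μ (measurable_one.indicator measurableSet_ball)]
      exact lintegral_mono hradial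
    _ = _ := lintegral_indicator_const measurableSet_ball _

theorem exists_sphereMeasure_le_smul_toSphere : ∃ C : ℝ≥0, sphereMeasure E ≤ C • μ.toSphere := by
  set d := finrank ℝ E with hd
  obtain ⟨k, hk⟩ : ∃ k, d = k + 1 := Nat.exists_eq_add_one.2 finrank_pos
  have hdk : (d : ℝ) - 1 = k := by rw [hk]; push_cast; ring
  set c : ℝ≥0∞ := ENNReal.ofReal ((4 ^ d)⁻¹) * μ (ball 0 1)
  have hc : c ≠ 0 := mul_ne_zero (by positivity) (measure_ball_pos μ _ one_pos).ne'
  have hc' : c ≠ ∞ := ENNReal.mul_ne_top ENNReal.ofReal_ne_top measure_ball_lt_top.ne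
  have hball (x : sphere (0 : E) 1) (r : ℝ) (hr : 0 < r) (hr1 : r ≤ 1) :
      c * ENNReal.ofReal r ^ ((d : ℝ) - 1) ≤ μ.toSphere (closedBall x r) := by
    have hle := measure_ball_le_toSphere_ball μ x (δ := r / 2) (by linarith)
    rw [mul_div_cancel₀ r two_ne_zero, Measure.addHaar_ball_of_pos μ _ (half_pos hr), ← hd] at hle
    have hK : 0 < 2 ^ d * (r / 2) := by positivity
    rw [← ENNReal.mul_le_mul_iff_right (ENNReal.ofReal_pos.2 hK).ne' ENNReal.ofReal_ne_top]
    refine le_trans (le_trans ?_ hle) (by gcongr; exact ball_subset_closedBall)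
    calc _ = ENNReal.ofReal (2 ^ d * (r / 2) * (4 ^ d)⁻¹ * r ^ k) * μ (ball 0 1) := by
          rw [hdk, ENNReal.rpow_natCast,
            ENNReal.ofReal_mul (p := 2 ^ d * (r / 2) * (4 ^ d)⁻¹) (by positivity),
            ENNReal.ofReal_mul (p := 2 ^ d * (r / 2)) hK.le, ENNReal.ofReal_pow hr.le]
          ring
      _ ≤ _ := by
          gcongr
          rw [show (4 : ℝ) = 2 * 2 by norm_num, mul_pow, div_pow, hk, pow_succ r]
          field_simp
          norm_num
  have hfin : 10 ^ ((d : ℝ) - 1) / c ≠ ∞ := ENNReal.div_ne_top (by simp) hc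
  refine ⟨(10 ^ ((d : ℝ) - 1) / c).toNNReal, ?_⟩
  have := hausdorffMeasure_le_smul_of_le_measure_closedBall (by simp [hdk]) hc hc' hball
  rwa [← ENNReal.coe_toNNReal hfin] at this

instance : IsFiniteMeasure (sphereMeasure E) := by
  obtain ⟨C, hC⟩ := exists_sphereMeasure_le_smul_toSphere (Measure.addHaar : Measure E)
  exact isFiniteMeasure_of_le _ hC

theorem exists_lintegral_sphereMeasure_le : ∃ C : ℝ≥0, ∀ (g : E → ℝ≥0∞) (p : E) (ρ : ℝ),
    Measurable g → 0 < ρ →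
      ∫⁻ θ, (∫⁻ r in Ioi (0 : ℝ), ENNReal.ofReal (r ^ (finrank ℝ E - 1)) *
        g (p + (r * ρ) • (θ : E))) ∂sphereMeasure E ≤
          C * (ENNReal.ofReal ((ρ ^ finrank ℝ E)⁻¹) * ∫⁻ x, g x ∂μ) := by
  obtain ⟨C, hC⟩ := exists_sphereMeasure_le_smul_toSphere μ
  refine ⟨C, fun g p ρ hg hρ ↦ ?_⟩
  refine (lintegral_mono' hC le_rfl).trans_eq ?_
  have hscale : ∫⁻ x, g (p + ρ • x) ∂μ = ENNReal.ofReal ((ρ ^ finrank ℝ E)⁻¹) * ∫⁻ x, g x ∂μ := by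
    rw [← lintegral_map (f := fun x ↦ g (p + x)) (g := (ρ • ·)) (by fun_prop) (by fun_prop),
      Measure.map_addHaar_smul μ hρ.ne', lintegral_smul_measure, lintegral_add_left_eq_self,
      abs_of_pos (by positivity), smul_eq_mul]
  rw [lintegral_smul_measure, ← hscale,
    ← lintegral_toSphere_lintegral_Ioi μ (g := fun x ↦ g (p + ρ • x)) (by fun_prop)]
  simp only [smul_smul, mul_comm]
  rfl

end Polar

section Ewald

variable {n : ℕ}

theorem sphere_eq_image_smul_sphere (c : Euc n) {ρ : ℝ} (hρ : 0 < ρ) (s : Set (Euc n)) :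
    s ∩ sphere c ρ = IsometryEquiv.addLeft c '' (ρ • (Subtype.val ''
      ((fun θ : sphere (0 : Euc n) 1 ↦ c + ρ • (θ : Euc n)) ⁻¹' s))) := by
  ext x
  constructor
  · rintro ⟨hx, hxs⟩
    have hθ : ρ⁻¹ • (x - c) ∈ sphere (0 : Euc n) 1 := by
      rw [mem_sphere_zero_iff_norm, norm_smul, mem_sphere_iff_norm.1 hxs, norm_inv,
        Real.norm_of_nonneg hρ.le, inv_mul_cancel₀ hρ.ne']
    refine ⟨x - c, ⟨ρ⁻¹ • (x - c), ⟨⟨_, hθ⟩, ?_, rfl⟩, ?_⟩, by simp⟩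
    · simpa [smul_smul, mul_inv_cancel₀ hρ.ne'] using hx
    · exact smul_inv_smul₀ hρ.ne' _
  · rintro ⟨_, ⟨_, ⟨θ, hθ, rfl⟩, rfl⟩, rfl⟩
    exact ⟨hθ, by simp [norm_smul, abs_of_pos hρ]⟩

theorem hausdorffMeasure_restrict_sphere [NeZero n] (c : Euc n) {ρ : ℝ} (hρ : 0 < ρ) :
    (Measure.hausdorffMeasure ((n : ℝ) - 1)).restrict (sphere c ρ) =
      ENNReal.ofReal (ρ ^ (n - 1)) •
        (sphereMeasure (Euc n)).map fun θ : sphere (0 : Euc n) 1 ↦ c + ρ • (θ : Euc n) := by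
  have hn : (n : ℝ) - 1 = ((n - 1 : ℕ) : ℝ) := by rw [Nat.cast_pred (NeZero.pos n)]
  ext s hs
  rw [Measure.restrict_apply hs, Measure.smul_apply, Measure.map_apply (by fun_prop) hs,
    sphere_eq_image_smul_sphere c hρ, IsometryEquiv.hausdorffMeasure_image,
    Measure.hausdorffMeasure_smul₀ (by simp [hn]) hρ.ne',
    isometry_subtype_coe.hausdorffMeasure_image (.inl (by simp [hn])), sphereMeasure,
    finrank_euclideanSpace_fin, hn, NNReal.rpow_natCast, ENNReal.smul_def, ENNReal.coe_pow,
    ENNReal.ofReal_pow hρ.le, ← Real.enorm_of_nonneg hρ.le]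
  rfl

theorem integral_ewaldM [NeZero n] {r : ℝ} (hr : 0 < r) {η : Euc n} (hη : η ≠ 0) (f : Euc n → ℂ) :
    ∫ ξ, f ξ ∂ewaldM n r η = ((r * (‖η‖ / 2)) ^ (n - 1)) •
      ∫ θ, f ((2 : ℝ)⁻¹ • η + (r * (‖η‖ / 2)) • (θ : Euc n)) ∂sphereMeasure (Euc n) := by
  have hρ : 0 < r * (‖η‖ / 2) := by have := norm_pos_iff.2 hη; positivity
  have hemb : MeasurableEmbedding fun θ : sphere (0 : Euc n) 1 ↦
      (2 : ℝ)⁻¹ • η + (r * (‖η‖ / 2)) • (θ : Euc n) :=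
    ((Homeomorph.smulOfNeZero _ hρ.ne').trans (Homeomorph.addLeft _)).measurableEmbedding.comp
      (MeasurableEmbedding.subtype_coe isClosed_sphere.measurableSet)
  rw [ewaldM, mul_div_assoc, hausdorffMeasure_restrict_sphere _ hρ, integral_smul_measure,
    ENNReal.toReal_ofReal (by positivity), hemb.integral_map]

end Ewald

section DerivMajorant

variable {E : Type*} [NormedAddCommGroup E] [NormedSpace ℝ E]

/-- `M` majorizes `ψ` and its derivatives up to order `k`, at frequency `N`:
`‖ψ⁽ʲ⁾‖ ≤ N ^ j * M` for `j ≤ k`. -/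
structure DerivMajorant (k : ℕ) (N : ℝ) (M : ℝ → ℝ) (ψ : ℝ → E) : Prop where
  contDiff : ContDiff ℝ k ψ
  norm_iteratedDeriv_le : ∀ j ≤ k, ∀ r, ‖iteratedDeriv j ψ r‖ ≤ N ^ j * M r

namespace DerivMajorant

variable {k : ℕ} {N : ℝ} {M : ℝ → ℝ} {ψ : ℝ → E}

lemma norm_le (h : DerivMajorant k N M ψ) (r : ℝ) : ‖ψ r‖ ≤ M r := by
  simpa using h.norm_iteratedDeriv_le 0 (Nat.zero_le k) r

lemma nonneg (h : DerivMajorant k N M ψ) (r : ℝ) : 0 ≤ M r :=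
  (norm_nonneg _).trans (h.norm_le r)

lemma mono {N' : ℝ} {M' : ℝ → ℝ} (h : DerivMajorant k N M ψ) (hN : 0 ≤ N) (hN' : N ≤ N')
    (hM : ∀ r, M r ≤ M' r) : DerivMajorant k N' M' ψ where
  contDiff := h.contDiff
  norm_iteratedDeriv_le j hj r := (h.norm_iteratedDeriv_le j hj r).trans <|
    mul_le_mul (pow_le_pow_left₀ hN hN' j) (hM r) (h.nonneg r) (pow_nonneg (hN.trans hN') j)

lemma of_const_mul {c : ℝ} (h : DerivMajorant k (c * N) M ψ) (hc : 1 ≤ c) (hN : 0 ≤ N) :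
    DerivMajorant k N (fun r ↦ c ^ k * M r) ψ where
  contDiff := h.contDiff
  norm_iteratedDeriv_le j hj r := by
    have hM := h.nonneg r
    calc ‖iteratedDeriv j ψ r‖ ≤ c ^ j * N ^ j * M r := by
          simpa only [mul_pow] using h.norm_iteratedDeriv_le j hj r
      _ ≤ c ^ k * N ^ j * M r := by gcongr
      _ = N ^ j * (c ^ k * M r) := by ring

lemma smul {A : Type*} [NormedField A] [NormedAlgebra ℝ A] [NormedSpace A E]
    [IsScalarTower ℝ A E] {N₁ N₂ : ℝ} {M₁ M₂ : ℝ → ℝ} {ψ₁ : ℝ → A} {ψ₂ : ℝ → E}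
    (h₁ : DerivMajorant k N₁ M₁ ψ₁) (h₂ : DerivMajorant k N₂ M₂ ψ₂) :
    DerivMajorant k (N₁ + N₂) (fun r ↦ M₁ r * M₂ r) (fun r ↦ ψ₁ r • ψ₂ r) where
  contDiff := h₁.contDiff.smul h₂.contDiff
  norm_iteratedDeriv_le j hj r := by
    rw [← norm_iteratedFDeriv_eq_norm_iteratedDeriv, add_pow, Finset.sum_mul]
    refine (norm_iteratedFDeriv_smul_le h₁.contDiff h₂.contDiff r (mod_cast hj)).trans
      (Finset.sum_le_sum fun i hi ↦ ?_)
    have hij : i ≤ j := Finset.mem_range_succ_iff.1 hi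
    have hb₁ := h₁.norm_iteratedDeriv_le i (hij.trans hj) r
    have hb₂ := h₂.norm_iteratedDeriv_le (j - i) ((Nat.sub_le j i).trans hj) r
    simp only [norm_iteratedFDeriv_eq_norm_iteratedDeriv]
    calc (j.choose i : ℝ) * ‖iteratedDeriv i ψ₁ r‖ * ‖iteratedDeriv (j - i) ψ₂ r‖
        ≤ (j.choose i : ℝ) * (N₁ ^ i * M₁ r) * (N₂ ^ (j - i) * M₂ r) := by
          have := (norm_nonneg _).trans hb₁
          gcongr
      _ = N₁ ^ i * N₂ ^ (j - i) * (j.choose i) * (M₁ r * M₂ r) := by ring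

end DerivMajorant

lemma sub_mul_norm_le_integral_of_norm_deriv_le [CompleteSpace E] {a b u K : ℝ} {g : ℝ → E}
    {B : ℝ → ℝ} (hg : ContDiff ℝ 1 g) (hB : Continuous B) (hgB : ∀ v, ‖g v‖ ≤ B v)
    (hg'B : ∀ v, ‖deriv g v‖ ≤ K * B v) (hu : u ∈ Icc a b) :
    (b - a) * ‖g u‖ ≤ (1 + K * (b - a)) * ∫ v in a..b, B v := by
  have hab : a ≤ b := hu.1.trans hu.2
  have hKB0 (v : ℝ) : 0 ≤ K * B v := (norm_nonneg _).trans (hg'B v)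
  have hosc (v : ℝ) (hv : v ∈ Icc a b) : ‖g u - g v‖ ≤ K * ∫ v in a..b, B v := by
    have hint : IntegrableOn (fun x ↦ K * B x) (Ioc a b) :=
      (continuous_const.mul hB).integrableOn_Ioc
    have hsub : uIoc v u ⊆ Ioc a b :=
      Ioc_subset_Ioc (le_inf hv.1 hu.1) (sup_le hv.2 hu.2)
    rw [← intervalIntegral.integral_deriv_eq_sub
        (fun t _ ↦ (hg.differentiable one_ne_zero).differentiableAt)
        ((hg.continuous_deriv le_rfl).intervalIntegrable _ _),
      ← intervalIntegral.integral_const_mul, intervalIntegral.integral_of_le hab]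
    calc ‖∫ t in v..u, deriv g t‖ ≤ ∫ t in uIoc v u, ‖deriv g t‖ :=
          intervalIntegral.norm_integral_le_integral_norm_uIoc
      _ ≤ ∫ t in uIoc v u, K * B t :=
          setIntegral_mono_on
            ((hg.continuous_deriv le_rfl).norm.intervalIntegrable v u).def'
            (hint.mono_set hsub) measurableSet_uIoc fun t _ ↦ hg'B t
      _ ≤ ∫ t in Ioc a b, K * B t :=
          setIntegral_mono_set hint (Eventually.of_forall hKB0) hsub.eventuallyLE
  have hpt (v : ℝ) (hv : v ∈ Icc a b) : ‖g u‖ ≤ B v + K * ∫ v in a..b, B v :=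
    calc ‖g u‖ ≤ ‖g v‖ + ‖g u - g v‖ := norm_le_insert' _ _
      _ ≤ B v + K * ∫ v in a..b, B v := add_le_add (hgB v) (hosc v hv)
  have hmean := intervalIntegral.integral_mono_on (μ := volume) hab
    intervalIntegrable_const ((hB.intervalIntegrable _ _).add intervalIntegrable_const) hpt
  rw [intervalIntegral.integral_const, intervalIntegral.integral_add
    (hB.intervalIntegrable _ _) intervalIntegrable_const, intervalIntegral.integral_const,
    smul_eq_mul, smul_eq_mul] at hmean
  linarith

end DerivMajorant

section PrincipalValue

variable {E : Type*} [NormedAddCommGroup E] [NormedSpace ℝ E]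

/-- The integrand of the principal value of `∫ s(r) / (1 - r) dr`, regularized by subtracting
`s 1` for `|1 - r| ≤ δ`; by oddness of `1 / (1 - r)` this leaves the principal value unchanged. -/
def pvIntegrand (δ : ℝ) (s : ℝ → E) (r : ℝ) : E :=
  (1 - r)⁻¹ • (s r - (closedBall 1 δ).indicator (fun _ ↦ s 1) r)

lemma setIntegral_closedBall_diff_inv_one_sub (δ ε : ℝ) :
    ∫ r in closedBall (1 : ℝ) δ \ closedBall 1 ε, (1 - r)⁻¹ = 0 := by
  rw [← integral_indicator (measurableSet_closedBall.diff measurableSet_closedBall)]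
  set f : ℝ → ℝ := (closedBall (1 : ℝ) δ \ closedBall 1 ε).indicator fun r ↦ (1 - r)⁻¹ with hf
  have hball (r ρ : ℝ) : 2 - r ∈ closedBall (1 : ℝ) ρ ↔ r ∈ closedBall (1 : ℝ) ρ := by
    rw [mem_closedBall, mem_closedBall, Real.dist_eq, Real.dist_eq, ← abs_neg]
    ring_nf
  have hodd (r : ℝ) : f (2 - r) = -f r := by
    have hmem : 2 - r ∈ closedBall (1 : ℝ) δ \ closedBall 1 ε ↔
        r ∈ closedBall (1 : ℝ) δ \ closedBall 1 ε := and_congr (hball r δ) (hball r ε).not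
    by_cases h : r ∈ closedBall (1 : ℝ) δ \ closedBall 1 ε
    · rw [hf, indicator_of_mem h, indicator_of_mem (hmem.2 h), ← inv_neg]
      ring_nf
    · rw [hf, indicator_of_notMem h, indicator_of_notMem (mt hmem.1 h), neg_zero]
  have hneg := integral_sub_left_eq_self f (volume : Measure ℝ) 2
  simp only [hodd, integral_neg] at hneg
  exact self_eq_neg.1 hneg.symm

lemma integrableOn_inv_one_sub_closedBall_diff (δ : ℝ) {ε : ℝ} (hε : 0 < ε) :
    IntegrableOn (fun r : ℝ ↦ (1 - r)⁻¹) (closedBall (1 : ℝ) δ \ closedBall 1 ε) := by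
  refine Measure.integrableOn_of_bounded (M := ε⁻¹)
    ((measure_mono sdiff_subset).trans_lt measure_closedBall_lt_top).ne
    (Measurable.aestronglyMeasurable (by fun_prop)) <|
    (ae_restrict_iff' (measurableSet_closedBall.diff measurableSet_closedBall)).2 <|
    Eventually.of_forall fun r hr ↦ ?_
  have hr' : ε < |1 - r| := by
    simpa only [mem_closedBall, Real.dist_eq, abs_sub_comm r, not_le] using hr.2
  rw [norm_inv, Real.norm_eq_abs]
  gcongr

lemma aecover_compl_closedBall {X : Type*} [MetricSpace X] [MeasurableSpace X] [BorelSpace X]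
    (μ : Measure X) [NullSingletonClass μ] (x : X) :
    AECover μ (𝓝[>] (0 : ℝ)) fun ε ↦ (closedBall x ε)ᶜ where
  ae_eventually_mem := by
    filter_upwards [compl_mem_ae_iff.2 (measure_singleton x)] with y hy
    filter_upwards [nhdsWithin_le_nhds (Iio_mem_nhds (dist_pos.2 hy))] with ε hε
    simpa using hε
  measurableSet _ := measurableSet_closedBall.compl

theorem tendsto_setIntegral_pvIntegrand [CompleteSpace E] {δ : ℝ} (hδ : δ < 1) {s : ℝ → E}
    (hs : IntegrableOn (pvIntegrand δ s) (Ioi 0)) :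
    Tendsto (fun ε ↦ ∫ r in Ioi 0 \ closedBall 1 ε, (1 - r)⁻¹ • s r) (𝓝[>] 0)
      (𝓝 (∫ r in Ioi 0, pvIntegrand δ s r)) := by
  refine ((aecover_compl_closedBall (volume.restrict (Ioi (0 : ℝ))) 1
    ).integral_tendsto_of_countably_generated hs).congr' ?_
  filter_upwards [self_mem_nhdsWithin] with ε hε
  have hsplit (r : ℝ) : (1 - r)⁻¹ • s r =
      pvIntegrand δ s r + (closedBall 1 δ).indicator (fun r ↦ (1 - r)⁻¹ • s 1) r := by
    by_cases h : r ∈ closedBall (1 : ℝ) δ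
    · simp only [pvIntegrand, indicator_of_mem h, smul_sub, sub_add_cancel]
    · simp only [pvIntegrand, indicator_of_notMem h, sub_zero, add_zero]
  have hset : closedBall (1 : ℝ) δ ∩ (Ioi 0 \ closedBall 1 ε) =
      closedBall 1 δ \ closedBall 1 ε := by
    refine Subset.antisymm (fun r hr ↦ ⟨hr.1, hr.2.2⟩) fun r hr ↦ ⟨hr.1, ?_, hr.2⟩
    have := abs_le.1 (Real.dist_eq r 1 ▸ mem_closedBall.1 hr.1)
    exact mem_Ioi.2 (by linarith)
  rw [Measure.restrict_restrict measurableSet_closedBall.compl, inter_comm, ← sdiff_eq]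
  simp only [hsplit]
  rw [integral_add (hs.mono_set sdiff_subset), setIntegral_indicator measurableSet_closedBall,
    inter_comm, hset, integral_smul_const, setIntegral_closedBall_diff_inv_one_sub, zero_smul,
    add_zero]
  rw [integrable_indicator_iff measurableSet_closedBall, IntegrableOn,
    Measure.restrict_restrict measurableSet_closedBall, hset]
  exact (integrableOn_inv_one_sub_closedBall_diff δ hε).smul_const _

lemma pvIntegrand_integral {Θ : Type*} [MeasurableSpace Θ] {σ : Measure Θ} {φ : Θ → ℝ → E}
    (hφ : ∀ r > 0, Integrable (fun θ ↦ φ θ r) σ) (δ : ℝ) {r : ℝ} (hr : 0 < r) :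
    pvIntegrand δ (fun r ↦ ∫ θ, φ θ r ∂σ) r = ∫ θ, pvIntegrand δ (φ θ) r ∂σ := by
  unfold pvIntegrand
  by_cases h : r ∈ closedBall (1 : ℝ) δ
  · simp only [indicator_of_mem h]
    rw [integral_smul, integral_sub (hφ r hr) (hφ 1 one_pos)]
  · simp only [indicator_of_notMem h, sub_zero, integral_smul]

theorem integrableOn_pvIntegrand_integral {Θ : Type*} [MeasurableSpace Θ] {σ : Measure Θ}
    [SFinite σ] {φ : Θ → ℝ → E} (hφ : ∀ r > 0, Integrable (fun θ ↦ φ θ r) σ) {δ : ℝ}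
    (hm : StronglyMeasurable fun z : Θ × ℝ ↦ pvIntegrand δ (φ z.1) z.2)
    (hfin : ∫⁻ θ, (∫⁻ r in Ioi 0, ‖pvIntegrand δ (φ θ) r‖ₑ) ∂σ ≠ ∞) :
    IntegrableOn (pvIntegrand δ fun r ↦ ∫ θ, φ θ r ∂σ) (Ioi 0) := by
  have hint : Integrable (fun z : Θ × ℝ ↦ pvIntegrand δ (φ z.1) z.2)
      (σ.prod (volume.restrict (Ioi 0))) := by
    refine ⟨hm.aestronglyMeasurable, ?_⟩
    rw [hasFiniteIntegral_iff_enorm, lintegral_prod _ hm.enorm.aemeasurable]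
    exact hfin.lt_top
  refine hint.integral_prod_right.congr ?_
  filter_upwards [ae_restrict_mem measurableSet_Ioi] with r hr
  exact (pvIntegrand_integral hφ δ hr).symm

theorem enorm_integral_pvIntegrand_integral_le {Θ : Type*} [MeasurableSpace Θ] {σ : Measure Θ}
    [SFinite σ] {φ : Θ → ℝ → E} (hφ : ∀ r > 0, Integrable (fun θ ↦ φ θ r) σ) {δ : ℝ}
    (hm : StronglyMeasurable fun z : Θ × ℝ ↦ pvIntegrand δ (φ z.1) z.2) :
    ‖∫ r in Ioi 0, pvIntegrand δ (fun r ↦ ∫ θ, φ θ r ∂σ) r‖ₑ ≤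
      ∫⁻ θ, (∫⁻ r in Ioi 0, ‖pvIntegrand δ (φ θ) r‖ₑ) ∂σ :=
  calc ‖∫ r in Ioi 0, pvIntegrand δ (fun r ↦ ∫ θ, φ θ r ∂σ) r‖ₑ
      ≤ ∫⁻ r in Ioi 0, ‖pvIntegrand δ (fun r ↦ ∫ θ, φ θ r ∂σ) r‖ₑ :=
        enorm_integral_le_lintegral_enorm _
    _ ≤ ∫⁻ r in Ioi 0, (∫⁻ θ, ‖pvIntegrand δ (φ θ) r‖ₑ ∂σ) := by
        refine setLIntegral_mono' measurableSet_Ioi fun r hr ↦ ?_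
        rw [pvIntegrand_integral hφ δ hr]
        exact enorm_integral_le_lintegral_enorm _
    _ = ∫⁻ θ, (∫⁻ r in Ioi 0, ‖pvIntegrand δ (φ θ) r‖ₑ) ∂σ :=
        (lintegral_lintegral_swap (f := fun θ r ↦ ‖pvIntegrand δ (φ θ) r‖ₑ)
          hm.enorm.aemeasurable).symm

end PrincipalValue

section RadialEstimate

/-- The density `r ^ k / (1 + r)`, with `k = n - 1`, that `S_r` carries in polar coordinates. -/
def radialWeight (k : ℕ) (r : ℝ) : ℝ := r ^ k / (1 + r)

lemma radialWeight_nonneg (k : ℕ) {r : ℝ} (hr : 0 ≤ r) : 0 ≤ radialWeight k r := by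
  unfold radialWeight; positivity

lemma radialWeight_le_pow (k : ℕ) {r : ℝ} (hr : 0 ≤ r) : radialWeight k r ≤ r ^ k :=
  div_le_self (by positivity) (by linarith)

@[fun_prop]
lemma measurable_radialWeight (k : ℕ) : Measurable (radialWeight k) := by
  unfold radialWeight; fun_prop

lemma mem_closedBall_one_iff_le {r δ : ℝ} : r ∈ closedBall (1 : ℝ) δ ↔ 1 - δ ≤ r ∧ r ≤ 1 + δ := by
  rw [Real.closedBall_eq_Icc, mem_Icc]

lemma exists_lipschitzOnWith_radialWeight (k : ℕ) :
    ∃ L : ℝ≥0, LipschitzOnWith L (radialWeight k) (closedBall 1 2⁻¹) := by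
  have hdiff : ContDiffOn ℝ 1 (radialWeight k) (closedBall 1 2⁻¹) := by
    refine ContDiffOn.div (by fun_prop) (by fun_prop) fun r hr ↦ ?_
    linarith [(mem_closedBall_one_iff_le.1 hr).1]
  exact hdiff.exists_lipschitzOnWith one_ne_zero (convex_closedBall _ _)
    (isCompact_closedBall _ _)

/-- The weight against which a majorant `M` at frequency `N` controls the principal value of
`radialWeight k r • ψ r / (1 - r)`. -/
def pvWeight (k : ℕ) (N : ℝ) (M : ℝ → ℝ) (r : ℝ) : ℝ := r ^ k * ((1 + N * |r - 1|)⁻¹ * M r)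

lemma closedBall_one_inv_two_mul_subset {N : ℝ} (hN : 1 ≤ N) :
    closedBall (1 : ℝ) (2 * N)⁻¹ ⊆ closedBall 1 2⁻¹ :=
  closedBall_subset_closedBall (inv_anti₀ two_pos (by linarith))

lemma ofReal_setIntegral_closedBall_le (k : ℕ) {N : ℝ} (hN : 1 ≤ N) {M : ℝ → ℝ}
    (hM : Continuous M) (hM0 : ∀ r, 0 ≤ M r) :
    ENNReal.ofReal (∫ r in closedBall 1 (2 * N)⁻¹, M r) ≤
      ENNReal.ofReal (2 ^ k * 2) * ∫⁻ r in Ioi 0, ENNReal.ofReal (pvWeight k N M r) := by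
  have hbound (r : ℝ) (hr : r ∈ closedBall 1 (2 * N)⁻¹) :
      0 < r ∧ M r ≤ 2 ^ k * 2 * pvWeight k N M r := by
    have hr1 := (mem_closedBall_one_iff_le.1 (closedBall_one_inv_two_mul_subset hN hr)).1
    have hrN : N * |r - 1| ≤ 2⁻¹ :=
      calc N * |r - 1| ≤ N * (2 * N)⁻¹ := by gcongr; exact mem_closedBall.1 hr
        _ = 2⁻¹ := by field_simp
    have hpow : 1 ≤ 2 ^ k * r ^ k := by
      rw [← mul_pow]
      exact one_le_pow₀ (by linarith)
    have hdefect : 1 ≤ 2 * (1 + N * |r - 1|)⁻¹ := by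
      rw [← div_eq_mul_inv, one_le_div (by positivity)]
      linarith
    refine ⟨by linarith, ?_⟩
    calc M r = 1 * 1 * M r := by ring
      _ ≤ (2 ^ k * r ^ k) * (2 * (1 + N * |r - 1|)⁻¹) * M r := by gcongr; exact hM0 r
      _ = 2 ^ k * 2 * pvWeight k N M r := by unfold pvWeight; ring
  rw [ofReal_integral_eq_lintegral_ofReal (hM.continuousOn.integrableOn_compact
    (isCompact_closedBall _ _)) (Eventually.of_forall hM0), ← lintegral_const_mul' _ _
    ENNReal.ofReal_ne_top]
  refine (setLIntegral_mono' measurableSet_closedBall fun r hr ↦ ?_).trans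
    (lintegral_mono_set fun r hr ↦ (hbound r hr).1)
  rw [← ENNReal.ofReal_mul (by positivity)]
  exact ENNReal.ofReal_le_ofReal (hbound r hr).2

namespace DerivMajorant

variable {E : Type*} [NormedAddCommGroup E] [NormedSpace ℝ E] {N : ℝ} {M : ℝ → ℝ} {ψ : ℝ → E}

lemma norm_iteratedDeriv_le_setIntegral [CompleteSpace E] (h : DerivMajorant 2 N M ψ)
    (hN : 0 < N) (hM : Continuous M) {j : ℕ} (hj : j ≤ 1) {u : ℝ}
    (hu : u ∈ closedBall 1 (2 * N)⁻¹) :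
    ‖iteratedDeriv j ψ u‖ ≤ 2 * N ^ (j + 1) * ∫ r in closedBall 1 (2 * N)⁻¹, M r := by
  have hdiff : ContDiff ℝ 1 (iteratedDeriv j ψ) := by
    rw [iteratedDeriv_eq_iterate]
    exact ContDiff.iterate_deriv' 1 j (h.contDiff.of_le (by norm_cast; omega))
  have havg := sub_mul_norm_le_integral_of_norm_deriv_le (K := N) (B := fun r ↦ N ^ j * M r)
    hdiff (by fun_prop) (h.norm_iteratedDeriv_le j (hj.trans one_le_two))
    (fun r ↦ by
      rw [← iteratedDeriv_succ, ← mul_assoc, ← pow_succ']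
      exact h.norm_iteratedDeriv_le (j + 1) (by omega) r)
    (Real.closedBall_eq_Icc ▸ hu)
  have hlen : 1 + (2 * N)⁻¹ - (1 - (2 * N)⁻¹) = N⁻¹ := by field_simp; ring
  rw [hlen, mul_inv_cancel₀ hN.ne', intervalIntegral.integral_const_mul,
    intervalIntegral.integral_of_le (by linarith [inv_pos.2 hN]), ← integral_Icc_eq_integral_Ioc,
    ← Real.closedBall_eq_Icc, inv_mul_le_iff₀ hN] at havg
  refine havg.trans_eq ?_
  ring

lemma pi_mul_enorm_radialWeight_smul_le [CompleteSpace E] (h : DerivMajorant 2 N M ψ)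
    (hN : 0 < N) (hM : Continuous M) (k : ℕ) :
    ENNReal.ofReal Real.pi * ‖radialWeight k 1 • ψ 1‖ₑ ≤
      ENNReal.ofReal (2 * Real.pi * N) * ENNReal.ofReal (∫ r in closedBall 1 (2 * N)⁻¹, M r) := by
  have hpi := Real.pi_pos
  have hψ : ‖ψ 1‖ ≤ 2 * N * ∫ r in closedBall 1 (2 * N)⁻¹, M r := by
    simpa only [iteratedDeriv_zero, zero_add, pow_one] using
      h.norm_iteratedDeriv_le_setIntegral hN hM zero_le_one (mem_closedBall_self (by positivity))
  rw [← ofReal_norm, ← ENNReal.ofReal_mul hpi.le, ← ENNReal.ofReal_mul (by positivity), norm_smul,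
    Real.norm_eq_abs, abs_of_nonneg (radialWeight_nonneg k zero_le_one)]
  refine ENNReal.ofReal_le_ofReal ?_
  calc Real.pi * (radialWeight k 1 * ‖ψ 1‖)
      ≤ Real.pi * (1 * (2 * N * ∫ r in closedBall 1 (2 * N)⁻¹, M r)) := by
        gcongr
        simpa using radialWeight_le_pow k zero_le_one
    _ = 2 * Real.pi * N * ∫ r in closedBall 1 (2 * N)⁻¹, M r := by ring

lemma norm_sub_le_setIntegral [CompleteSpace E] (h : DerivMajorant 2 N M ψ) (hN : 0 < N)
    (hM : Continuous M) {r : ℝ} (hr : r ∈ closedBall 1 (2 * N)⁻¹) :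
    ‖ψ r - ψ 1‖ ≤ 2 * N ^ 2 * (∫ r in closedBall 1 (2 * N)⁻¹, M r) * |r - 1| :=
  (convex_closedBall _ _).norm_image_sub_le_of_norm_deriv_le
    (fun _ _ ↦ (h.contDiff.differentiable two_ne_zero).differentiableAt)
    (fun u hu ↦ by
      rw [← iteratedDeriv_one]
      exact h.norm_iteratedDeriv_le_setIntegral hN hM le_rfl hu)
    (mem_closedBall_self (by positivity)) hr

lemma norm_pvIntegrand_le_of_mem_closedBall [CompleteSpace E] (h : DerivMajorant 2 N M ψ)
    (hN : 1 ≤ N) (hM : Continuous M) {k : ℕ} {L : ℝ≥0}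
    (hL : LipschitzOnWith L (radialWeight k) (closedBall 1 2⁻¹)) {r : ℝ}
    (hr : r ∈ closedBall 1 (2 * N)⁻¹) :
    ‖pvIntegrand (2 * N)⁻¹ (fun r ↦ radialWeight k r • ψ r) r‖ ≤
      2 * (2 ^ k + L) * N ^ 2 * ∫ r in closedBall 1 (2 * N)⁻¹, M r := by
  have hN0 : 0 < N := by linarith
  have hone : (1 : ℝ) ∈ closedBall 1 (2 * N)⁻¹ := mem_closedBall_self (by positivity)
  set m := ∫ r in closedBall 1 (2 * N)⁻¹, M r
  have hm0 : 0 ≤ m := integral_nonneg h.nonneg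
  have hball := closedBall_one_inv_two_mul_subset hN
  have hr' := mem_closedBall_one_iff_le.1 (hball hr)
  have hr0 : 0 ≤ r := by linarith
  have hweight : |radialWeight k r| ≤ 2 ^ k := by
    rw [abs_of_nonneg (radialWeight_nonneg k hr0)]
    exact (radialWeight_le_pow k hr0).trans (pow_le_pow_left₀ hr0 (by linarith) k)
  have hlip : |radialWeight k r - radialWeight k 1| ≤ L * |r - 1| := by
    simpa only [Real.dist_eq] using hL.dist_le_mul r (hball hr) 1 (hball hone)
  have hψ1 : ‖ψ 1‖ ≤ 2 * N ^ 2 * m := by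
    refine (h.norm_iteratedDeriv_le_setIntegral hN0 hM zero_le_one hone).trans ?_
    gcongr
    norm_num
  have hnum : ‖radialWeight k r • ψ r - radialWeight k 1 • ψ 1‖ ≤
      2 * (2 ^ k + L) * N ^ 2 * m * |r - 1| :=
    calc ‖radialWeight k r • ψ r - radialWeight k 1 • ψ 1‖
        = ‖radialWeight k r • (ψ r - ψ 1) + (radialWeight k r - radialWeight k 1) • ψ 1‖ := by
          congr 1; module
      _ ≤ |radialWeight k r| * ‖ψ r - ψ 1‖ + |radialWeight k r - radialWeight k 1| * ‖ψ 1‖ := by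
          simpa only [norm_smul, Real.norm_eq_abs] using norm_add_le
            (radialWeight k r • (ψ r - ψ 1)) ((radialWeight k r - radialWeight k 1) • ψ 1)
      _ ≤ 2 ^ k * (2 * N ^ 2 * m * |r - 1|) + L * |r - 1| * (2 * N ^ 2 * m) := by
          have := h.norm_sub_le_setIntegral hN0 hM hr
          gcongr
      _ = 2 * (2 ^ k + L) * N ^ 2 * m * |r - 1| := by ring
  rw [pvIntegrand, indicator_of_mem hr, norm_smul, norm_inv, Real.norm_eq_abs, abs_sub_comm]
  exact inv_mul_le_of_le_mul₀ (abs_nonneg _) (by positivity) (by linarith)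

lemma norm_pvIntegrand_le_of_notMem_closedBall (h : DerivMajorant 2 N M ψ) (hN : 0 < N) (k : ℕ)
    {r : ℝ} (hr0 : 0 ≤ r) (hr : r ∉ closedBall 1 (2 * N)⁻¹) :
    ‖pvIntegrand (2 * N)⁻¹ (fun r ↦ radialWeight k r • ψ r) r‖ ≤ 3 * N * pvWeight k N M r := by
  rw [mem_closedBall, Real.dist_eq, not_le] at hr
  have hfar : 1 ≤ 2 * N * |r - 1| := by
    rw [← inv_mul_le_iff₀ (by positivity), mul_one]
    exact hr.le
  have hpos : 0 < |r - 1| := (inv_pos.2 (by positivity)).trans hr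
  have hinv : |r - 1|⁻¹ ≤ 3 * N * (1 + N * |r - 1|)⁻¹ := by
    rw [← div_eq_mul_inv, inv_eq_one_div, div_le_div_iff₀ hpos (by positivity)]
    linarith
  have := h.nonneg r
  rw [pvIntegrand, indicator_of_notMem (by rwa [mem_closedBall, Real.dist_eq, not_le]), sub_zero,
    norm_smul, norm_inv, Real.norm_eq_abs, abs_sub_comm, norm_smul, Real.norm_eq_abs,
    abs_of_nonneg (radialWeight_nonneg k hr0)]
  calc |r - 1|⁻¹ * (radialWeight k r * ‖ψ r‖)
      ≤ 3 * N * (1 + N * |r - 1|)⁻¹ * (r ^ k * M r) := by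
        gcongr
        exacts [mul_nonneg (radialWeight_nonneg k hr0) (norm_nonneg _), radialWeight_le_pow k hr0,
          h.norm_le r]
    _ = 3 * N * pvWeight k N M r := by unfold pvWeight; ring

lemma lintegral_pvIntegrand_le [CompleteSpace E] (h : DerivMajorant 2 N M ψ) (hN : 1 ≤ N)
    (hM : Continuous M) {k : ℕ} {L : ℝ≥0}
    (hL : LipschitzOnWith L (radialWeight k) (closedBall 1 2⁻¹)) :
    ∫⁻ r in Ioi 0, ‖pvIntegrand (2 * N)⁻¹ (fun r ↦ radialWeight k r • ψ r) r‖ₑ ≤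
      ENNReal.ofReal (2 * (2 ^ k + L) * N) *
          ENNReal.ofReal (∫ r in closedBall 1 (2 * N)⁻¹, M r) +
        ENNReal.ofReal (3 * N) * ∫⁻ r in Ioi 0, ENNReal.ofReal (pvWeight k N M r) := by
  set m := ∫ r in closedBall 1 (2 * N)⁻¹, M r
  set c := ENNReal.ofReal (2 * (2 ^ k + L) * N ^ 2 * m) with hc
  calc ∫⁻ r in Ioi 0, ‖pvIntegrand (2 * N)⁻¹ (fun r ↦ radialWeight k r • ψ r) r‖ₑ
      ≤ ∫⁻ r in Ioi 0, ((closedBall 1 (2 * N)⁻¹).indicator (fun _ ↦ c) r +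
          ENNReal.ofReal (3 * N) * ENNReal.ofReal (pvWeight k N M r)) := by
        refine setLIntegral_mono' measurableSet_Ioi fun r hr ↦ ?_
        rw [← ofReal_norm]
        by_cases hmem : r ∈ closedBall 1 (2 * N)⁻¹
        · rw [indicator_of_mem hmem]
          exact le_add_right
            (ENNReal.ofReal_le_ofReal (h.norm_pvIntegrand_le_of_mem_closedBall hN hM hL hmem))
        · rw [indicator_of_notMem hmem, zero_add, ← ENNReal.ofReal_mul (by positivity)]
          exact ENNReal.ofReal_le_ofReal <|
            h.norm_pvIntegrand_le_of_notMem_closedBall (by linarith) k (le_of_lt hr) hmem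
    _ ≤ (∫⁻ r : ℝ, (closedBall 1 (2 * N)⁻¹).indicator (fun _ ↦ c) r) + ENNReal.ofReal (3 * N) *
          ∫⁻ r in Ioi 0, ENNReal.ofReal (pvWeight k N M r) := by
        rw [lintegral_add_left (measurable_const.indicator measurableSet_closedBall),
          lintegral_const_mul' _ _ ENNReal.ofReal_ne_top]
        gcongr
        exact Measure.restrict_le_self
    _ = _ := by
        rw [lintegral_indicator_const measurableSet_closedBall, Real.volume_closedBall, hc,
          ← ENNReal.ofReal_mul' (by positivity), ← ENNReal.ofReal_mul (by positivity)]
        congr 2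
        field_simp

end DerivMajorant

theorem exists_enorm_add_lintegral_pvIntegrand_le {E : Type*} [NormedAddCommGroup E]
    [NormedSpace ℝ E] [CompleteSpace E] (k : ℕ) :
    ∃ C : ℝ, 0 < C ∧ ∀ (N : ℝ) (M : ℝ → ℝ) (ψ : ℝ → E), 1 ≤ N → Continuous M →
      DerivMajorant 2 N M ψ →
      ENNReal.ofReal Real.pi * ‖radialWeight k 1 • ψ 1‖ₑ +
          ∫⁻ r in Ioi 0, ‖pvIntegrand (2 * N)⁻¹ (fun r ↦ radialWeight k r • ψ r) r‖ₑ ≤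
        ENNReal.ofReal (C * N) * ∫⁻ r in Ioi 0, ENNReal.ofReal (pvWeight k N M r) := by
  obtain ⟨L, hL⟩ := exists_lipschitzOnWith_radialWeight k
  refine ⟨(2 * Real.pi + 2 * (2 ^ k + L)) * (2 ^ k * 2) + 3, by positivity,
    fun N M ψ hN hM h ↦ ?_⟩
  have hN0 : 0 < N := by linarith
  set J := ∫⁻ r in Ioi 0, ENNReal.ofReal (pvWeight k N M r)
  set m := ∫ r in closedBall 1 (2 * N)⁻¹, M r
  calc _ ≤ ENNReal.ofReal (2 * Real.pi * N) * ENNReal.ofReal m +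
        (ENNReal.ofReal (2 * (2 ^ k + L) * N) * ENNReal.ofReal m + ENNReal.ofReal (3 * N) * J) :=
        add_le_add (h.pi_mul_enorm_radialWeight_smul_le hN0 hM k)
          (h.lintegral_pvIntegrand_le hN hM hL)
    _ ≤ ENNReal.ofReal (2 * Real.pi * N) * (ENNReal.ofReal (2 ^ k * 2) * J) +
        (ENNReal.ofReal (2 * (2 ^ k + L) * N) * (ENNReal.ofReal (2 ^ k * 2) * J) +
          ENNReal.ofReal (3 * N) * J) := by
        have := ofReal_setIntegral_closedBall_le k hN hM h.nonneg
        gcongr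
    _ = _ := by
        rw [← mul_assoc, ← mul_assoc, ← add_mul, ← add_mul, ← ENNReal.ofReal_mul (by positivity),
          ← ENNReal.ofReal_mul (by positivity),
          ← ENNReal.ofReal_add (by positivity) (by positivity),
          ← ENNReal.ofReal_add (by positivity) (by positivity)]
        congr 2
        ring

end RadialEstimate

section LineMajorant

variable {V E : Type*} [NormedAddCommGroup V] [NormedSpace ℝ V] [NormedAddCommGroup E]
  [NormedSpace ℝ E]

/-- `m` majorizes `F` and its directional derivatives up to order `k`, along every line. -/
def LineMajorant (k : ℕ) (m : V → ℝ) (F : V → E) : Prop :=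
  ∀ x v : V, DerivMajorant k ‖v‖ (fun τ ↦ m (x + τ • v)) (fun τ ↦ F (x + τ • v))

lemma LineMajorant.norm_le {k : ℕ} {m : V → ℝ} {F : V → E} (h : LineMajorant k m F) (x : V) :
    ‖F x‖ ≤ m x := by
  simpa only [zero_smul, add_zero] using (h x 0).norm_le 0

lemma LineMajorant.nonneg {k : ℕ} {m : V → ℝ} {F : V → E} (h : LineMajorant k m F) (x : V) :
    0 ≤ m x :=
  (norm_nonneg _).trans (h.norm_le x)

lemma hasDerivAt_add_smul (x v : V) (τ : ℝ) : HasDerivAt (fun τ : ℝ ↦ x + τ • v) v τ := by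
  simpa only [one_smul, id] using ((hasDerivAt_id τ).smul_const v).const_add x

namespace DerivMajorant

lemma differentiable_deriv {N : ℝ} {M : ℝ → ℝ} {ψ : ℝ → E} (h : DerivMajorant 2 N M ψ) :
    Differentiable ℝ (deriv ψ) :=
  ((contDiff_succ_iff_deriv (n := 1)).1 h.contDiff).2.2.differentiable one_ne_zero

variable {N : ℝ} {g : ℝ → ℝ}

lemma hasDerivAt_rpow (h : DerivMajorant 2 N g g) (hg : ∀ τ, 0 < g τ) (b τ : ℝ) :
    HasDerivAt (fun τ ↦ g τ ^ b) (deriv g τ * b * g τ ^ (b - 1)) τ :=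
  (h.contDiff.differentiable two_ne_zero).differentiableAt.hasDerivAt.rpow_const
    (Or.inl (hg τ).ne')

lemma abs_deriv_rpow_le (h : DerivMajorant 2 N g g) (hg : ∀ τ, 0 < g τ) (b τ : ℝ) :
    |deriv (fun τ ↦ g τ ^ b) τ| ≤ N * |b| * g τ ^ b := by
  have hpos := Real.rpow_nonneg (hg τ).le (b - 1)
  have hone : |deriv g τ| ≤ N * g τ := by
    simpa only [iteratedDeriv_one, pow_one, Real.norm_eq_abs] using
      h.norm_iteratedDeriv_le 1 one_le_two τ
  rw [(h.hasDerivAt_rpow hg b τ).deriv, abs_mul, abs_mul, abs_of_nonneg hpos]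
  calc |deriv g τ| * |b| * g τ ^ (b - 1) ≤ N * g τ * |b| * g τ ^ (b - 1) := by gcongr
    _ = N * |b| * g τ ^ b := by
        rw [Real.rpow_sub_one (hg τ).ne']
        field_simp [(hg τ).ne']

lemma abs_deriv_deriv_rpow_le (h : DerivMajorant 2 N g g) (hg : ∀ τ, 0 < g τ) (b τ : ℝ) :
    |deriv (deriv fun τ ↦ g τ ^ b) τ| ≤ ((|b| + 1) * N) ^ 2 * g τ ^ b := by
  have hpos (c : ℝ) : 0 ≤ g τ ^ c := Real.rpow_nonneg (hg τ).le c
  have hpred (c : ℝ) : g τ * g τ ^ (c - 1) = g τ ^ c := by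
    rw [Real.rpow_sub_one (hg τ).ne', mul_div_cancel₀ _ (hg τ).ne']
  have hone : |deriv g τ| ≤ N * g τ := by
    simpa only [iteratedDeriv_one, pow_one, Real.norm_eq_abs] using
      h.norm_iteratedDeriv_le 1 one_le_two τ
  have htwo : |deriv (deriv g) τ| ≤ N ^ 2 * g τ := by
    simpa only [iteratedDeriv_succ, iteratedDeriv_zero, Real.norm_eq_abs] using
      h.norm_iteratedDeriv_le 2 le_rfl τ
  have hNg : 0 ≤ N * g τ := (abs_nonneg _).trans hone
  have hb1 : |b - 1| ≤ |b| + 1 := by simpa only [abs_one] using abs_sub b 1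
  have hderiv_two : deriv (fun τ ↦ deriv g τ * b * g τ ^ (b - 1)) τ =
      deriv (deriv g) τ * b * g τ ^ (b - 1) +
        deriv g τ * b * (deriv g τ * (b - 1) * g τ ^ (b - 1 - 1)) :=
    (((h.differentiable_deriv τ).hasDerivAt.mul_const b).mul
      (h.hasDerivAt_rpow hg (b - 1) τ)).deriv
  rw [funext fun τ ↦ (h.hasDerivAt_rpow hg b τ).deriv, hderiv_two]
  calc |deriv (deriv g) τ * b * g τ ^ (b - 1) +
          deriv g τ * b * (deriv g τ * (b - 1) * g τ ^ (b - 1 - 1))|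
      ≤ |deriv (deriv g) τ| * |b| * g τ ^ (b - 1) +
          |deriv g τ| * |b| * (|deriv g τ| * |b - 1| * g τ ^ (b - 1 - 1)) := by
        refine (abs_add_le _ _).trans_eq ?_
        simp only [abs_mul, abs_of_nonneg (hpos _)]
    _ ≤ N ^ 2 * g τ * |b| * g τ ^ (b - 1) +
          N * g τ * |b| * (N * g τ * (|b| + 1) * g τ ^ (b - 1 - 1)) := by
        have := hpos (b - 1)
        have := hpos (b - 1 - 1)
        gcongr
    _ = N ^ 2 * (|b| ^ 2 + 2 * |b|) * g τ ^ b := by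
        rw [← hpred b, ← hpred (b - 1)]; ring
    _ ≤ ((|b| + 1) * N) ^ 2 * g τ ^ b := by
        rw [mul_pow, mul_comm (_ ^ 2) (N ^ 2)]
        gcongr
        exacts [hpos b, by linarith]

lemma rpow (h : DerivMajorant 2 N g g) (hg : ∀ τ, 0 < g τ) (hN : 0 ≤ N) (b : ℝ) :
    DerivMajorant 2 ((|b| + 1) * N) (fun τ ↦ g τ ^ b) (fun τ ↦ g τ ^ b) := by
  refine ⟨h.contDiff.rpow_const_of_ne fun τ ↦ (hg τ).ne', fun j hj τ ↦ ?_⟩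
  have hpos := Real.rpow_nonneg (hg τ).le b
  interval_cases j
  · rw [iteratedDeriv_zero, pow_zero, one_mul, Real.norm_of_nonneg hpos]
  · rw [iteratedDeriv_one, pow_one]
    refine (h.abs_deriv_rpow_le hg b τ).trans (mul_le_mul_of_nonneg_right ?_ hpos)
    linarith
  · rw [iteratedDeriv_succ, iteratedDeriv_one]
    exact h.abs_deriv_deriv_rpow_le hg b τ

end DerivMajorant

end LineMajorant

section SobolevDensity

variable {ι V H : Type*} [Fintype ι] [NormedAddCommGroup V] [InnerProductSpace ℝ V]
  [NormedAddCommGroup H] [InnerProductSpace ℂ H]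

lemma derivMajorant_one_add_norm_sq (x v : V) :
    DerivMajorant 2 (2 * ‖v‖) (fun τ ↦ 1 + ‖x + τ • v‖ ^ 2) (fun τ ↦ 1 + ‖x + τ • v‖ ^ 2) := by
  have hderiv : deriv (fun τ : ℝ ↦ 1 + ‖x + τ • v‖ ^ 2) = fun τ ↦ 2 * ⟪x + τ • v, v⟫ :=
    funext fun τ ↦ ((hasDerivAt_add_smul x v τ).norm_sq.const_add 1).deriv
  have hderiv_two (τ : ℝ) : deriv (fun τ : ℝ ↦ 2 * ⟪x + τ • v, v⟫) τ = 2 * ‖v‖ ^ 2 := by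
    simpa only [inner_zero_right, zero_add, real_inner_self_eq_norm_sq] using
      (((hasDerivAt_add_smul x v τ).inner ℝ (hasDerivAt_const τ v)).const_mul 2).deriv
  refine ⟨contDiff_const.add (ContDiff.norm_sq ℝ (by fun_prop)), fun j hj τ ↦ ?_⟩
  interval_cases j
  · rw [iteratedDeriv_zero, pow_zero, one_mul, Real.norm_of_nonneg (by positivity)]
  · rw [iteratedDeriv_one, hderiv, norm_mul, Real.norm_two, pow_one, mul_assoc]
    gcongr
    calc ‖⟪x + τ • v, v⟫‖ ≤ ‖x + τ • v‖ * ‖v‖ := norm_inner_le_norm _ _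
      _ ≤ ‖v‖ * (1 + ‖x + τ • v‖ ^ 2) := by
          rw [mul_comm]
          gcongr
          nlinarith [sq_nonneg (‖x + τ • v‖ - 1)]
  · rw [iteratedDeriv_succ, iteratedDeriv_one, hderiv, hderiv_two,
      Real.norm_of_nonneg (by positivity)]
    nlinarith [mul_nonneg (sq_nonneg ‖v‖) (sq_nonneg ‖x + τ • v‖), sq_nonneg ‖v‖]

lemma LineMajorant.one_add_norm_sq_rpow_smul {m : V → ℝ} {h : V → H} (hm : LineMajorant 2 m h)
    (b : ℝ) :
    LineMajorant 2 (fun x ↦ (2 * |b| + 3) ^ 2 * ((1 + ‖x‖ ^ 2) ^ b * m x))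
      (fun x ↦ (1 + ‖x‖ ^ 2) ^ b • h x) := fun x v ↦ by
  have hw := (derivMajorant_one_add_norm_sq x v).rpow (fun τ ↦ by positivity) (by positivity) b
  have hfreq : (|b| + 1) * (2 * ‖v‖) + ‖v‖ = (2 * |b| + 3) * ‖v‖ := by ring
  exact (hfreq ▸ hw.smul (hm x v)).of_const_mul (by linarith [abs_nonneg b]) (norm_nonneg v)

/-- The sum of the absolute values of the partial derivatives of `h` up to order `k`, in the
coordinates of an orthonormal basis. -/
def sobolevDensity (b : OrthonormalBasis ι ℝ V) (k : ℕ) (h : 𝓢(V, H)) (x : V) : ℝ :=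
  ∑ j ∈ Finset.range (k + 1), ∑ s : Fin j → ι, ‖(∂^{b ∘ s} h) x‖

variable (b : OrthonormalBasis ι ℝ V) (k : ℕ) (h : 𝓢(V, H))

lemma continuous_sobolevDensity : Continuous (sobolevDensity b k h) :=
  continuous_finsetSum _ fun _ _ ↦ continuous_finsetSum _ fun _ _ ↦
    (SchwartzMap.continuous _).norm

lemma iteratedDeriv_schwartzMap_line (x v : V) (j : ℕ) :
    iteratedDeriv j (fun τ : ℝ ↦ h (x + τ • v)) =
      fun τ ↦ (∂^{fun _ : Fin j ↦ v} h) (x + τ • v) := by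
  induction j with
  | zero => simp
  | succ j ih =>
    ext τ
    rw [iteratedDeriv_succ, ih, LineDeriv.iteratedLineDerivOp_succ_left]
    exact ((SchwartzMap.hasFDerivAt _ _).comp_hasDerivAt τ (hasDerivAt_add_smul x v τ)).deriv

lemma norm_iteratedLineDerivOp_const_le {j : ℕ} (hj : j ≤ k) (v x : V) :
    ‖(∂^{fun _ : Fin j ↦ v} h) x‖ ≤ ‖v‖ ^ j * sobolevDensity b k h x := by
  classical
  have hexpand : (∂^{fun _ : Fin j ↦ v} h) x =
      ∑ s : Fin j → ι, (∏ i, ⟪b (s i), v⟫) • (∂^{b ∘ s} h) x := by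
    simp only [SchwartzMap.iteratedLineDerivOp_eq_iteratedFDeriv]
    nth_rewrite 1 [← b.sum_repr' v]
    rw [ContinuousMultilinearMap.map_sum]
    exact Finset.sum_congr rfl fun s _ ↦ ContinuousMultilinearMap.map_smul_univ _ _ _
  have hcoord (s : Fin j → ι) : ∏ i, ‖⟪b (s i), v⟫‖ ≤ ‖v‖ ^ j := by
    refine (Finset.prod_le_prod (g := fun _ ↦ ‖v‖) (fun _ _ ↦ norm_nonneg _)
      fun i _ ↦ ?_).trans_eq (by simp)
    simpa only [b.norm_eq_one, one_mul] using norm_inner_le_norm (𝕜 := ℝ) (b (s i)) v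
  rw [hexpand]
  calc ‖∑ s : Fin j → ι, (∏ i, ⟪b (s i), v⟫) • (∂^{b ∘ s} h) x‖
      ≤ ∑ s : Fin j → ι, ‖v‖ ^ j * ‖(∂^{b ∘ s} h) x‖ := by
        refine norm_sum_le_of_le _ fun s _ ↦ ?_
        rw [norm_smul, norm_prod]
        gcongr
        exact hcoord s
    _ ≤ ‖v‖ ^ j * sobolevDensity b k h x := by
        rw [← Finset.mul_sum]
        gcongr
        exact Finset.single_le_sum (f := fun j ↦ ∑ s : Fin j → ι, ‖(∂^{b ∘ s} h) x‖)
          (fun _ _ ↦ Finset.sum_nonneg fun _ _ ↦ norm_nonneg _)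
          (Finset.mem_range_succ_iff.2 hj)

lemma lineMajorant_sobolevDensity : LineMajorant k (sobolevDensity b k h) h := fun x v ↦
  ⟨(h.smooth k).comp (by fun_prop), fun j hj τ ↦ by
    rw [iteratedDeriv_schwartzMap_line]
    exact norm_iteratedLineDerivOp_const_le b k h hj v _⟩

variable [FiniteDimensional ℝ V] [MeasurableSpace V] [BorelSpace V]

lemma norm_fourierInv_iteratedLineDerivOp_le {j : ℕ} (s : Fin j → ι) (y : V) :
    ‖𝓕⁻ (∂^{b ∘ s} h) y‖ ≤ ‖(2 * Real.pi) • y‖ ^ j * ‖𝓕⁻ h y‖ := by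
  induction j with
  | zero => simp
  | succ j ih =>
    have hcoord : ‖⟪y, b (s 0)⟫‖ ≤ ‖y‖ := by
      simpa only [b.norm_eq_one, mul_one] using norm_inner_le_norm (𝕜 := ℝ) y (b (s 0))
    have hconst : ‖-(2 * (Real.pi : ℂ) * Complex.I)‖ = ‖2 * Real.pi‖ := by simp
    rw [LineDeriv.iteratedLineDerivOp_succ_left, SchwartzMap.fourierInv_lineDerivOp_eq,
      smul_apply, SchwartzMap.smulLeftCLM_apply_apply (by fun_prop), norm_smul, norm_smul,
      hconst, ← mul_assoc, pow_succ', mul_assoc (‖_‖) (_ ^ j)]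
    refine mul_le_mul ?_ (ih (Fin.tail s)) (norm_nonneg _) (norm_nonneg _)
    rw [norm_smul]
    gcongr
    exact hcoord

lemma memLp_sobolevDensity : MemLp (sobolevDensity b k h) 2 volume :=
  memLp_finsetSum _ fun _ _ ↦ memLp_finsetSum _ fun _ _ ↦ (SchwartzMap.memLp _ 2 volume).norm

variable [CompleteSpace H]

lemma eLpNorm_fourierInv : eLpNorm (𝓕⁻ h : 𝓢(V, H)) 2 volume = eLpNorm h 2 volume := by
  have hnorm := SchwartzMap.norm_fourier_toL2_eq (𝓕⁻ h)
  rw [FourierTransform.fourier_fourierInv_eq, SchwartzMap.norm_toLp, SchwartzMap.norm_toLp] at hnorm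
  exact ((ENNReal.toReal_eq_toReal_iff' (SchwartzMap.memLp _ 2 volume).eLpNorm_ne_top
    (SchwartzMap.memLp _ 2 volume).eLpNorm_ne_top).1 hnorm).symm

lemma eLpNorm_sobolevDensity_le :
    eLpNorm (sobolevDensity b k h) 2 volume ≤
      (∑ j ∈ Finset.range (k + 1), Fintype.card (Fin j → ι) : ℕ) *
        eLpNorm (fun y ↦ √(1 + ‖(2 * Real.pi) • y‖ ^ 2) ^ k • 𝓕⁻ h y) 2 volume := by
  set X := eLpNorm (fun y ↦ √(1 + ‖(2 * Real.pi) • y‖ ^ 2) ^ k • 𝓕⁻ h y) 2 volume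
  have hterm (j : ℕ) (hj : j ∈ Finset.range (k + 1)) (s : Fin j → ι) :
      eLpNorm (fun x ↦ ‖(∂^{b ∘ s} h) x‖) 2 volume ≤ X := by
    rw [eLpNorm_norm, ← eLpNorm_fourierInv]
    refine eLpNorm_mono fun y ↦ (norm_fourierInv_iteratedLineDerivOp_le b h s y).trans ?_
    have hle : ‖(2 * Real.pi) • y‖ ≤ √(1 + ‖(2 * Real.pi) • y‖ ^ 2) :=
      Real.le_sqrt_of_sq_le (by linarith)
    have hone : 1 ≤ √(1 + ‖(2 * Real.pi) • y‖ ^ 2) :=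
      Real.one_le_sqrt.2 (by linarith [sq_nonneg ‖(2 * Real.pi) • y‖])
    rw [norm_smul (_ ^ k), Real.norm_of_nonneg (pow_nonneg (Real.sqrt_nonneg _) k)]
    gcongr
    exact (pow_le_pow_left₀ (norm_nonneg _) hle j).trans
      (pow_le_pow_right₀ hone (Finset.mem_range_succ_iff.1 hj))
  have hmeas {j : ℕ} (s : Fin j → ι) :
      AEStronglyMeasurable (fun x ↦ ‖(∂^{b ∘ s} h) x‖) volume :=
    (SchwartzMap.continuous _).norm.aestronglyMeasurable
  have hsum : sobolevDensity b k h =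
      ∑ j ∈ Finset.range (k + 1), ∑ s : Fin j → ι, fun x ↦ ‖(∂^{b ∘ s} h) x‖ := by
    ext x
    simp only [sobolevDensity, Finset.sum_apply]
  rw [hsum]
  calc _ ≤ ∑ j ∈ Finset.range (k + 1), ∑ _s : Fin j → ι, X :=
        (eLpNorm_sum_le (fun j _ ↦ Finset.aestronglyMeasurable_sum _ fun s _ ↦ hmeas s)
          one_le_two).trans <| Finset.sum_le_sum fun j hj ↦
            (eLpNorm_sum_le (fun s _ ↦ hmeas s) one_le_two).trans <|
              Finset.sum_le_sum fun s _ ↦ hterm j hj s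
    _ = _ := by
        simp only [Finset.sum_const, Finset.card_univ, nsmul_eq_mul, Nat.cast_sum,
          Finset.sum_mul]

end SobolevDensity

section FourierTransform

lemma eLpNorm_comp_smul {V H : Type*} [NormedAddCommGroup V] [NormedSpace ℝ V]
    [FiniteDimensional ℝ V] [MeasurableSpace V] [BorelSpace V] [NormedAddCommGroup H]
    (μ : Measure V) [μ.IsAddHaarMeasure] {c : ℝ} (hc : c ≠ 0) {p : ℝ≥0∞} (hp : p ≠ ∞)
    (G : V → H) :
    eLpNorm (fun y ↦ G (c • y)) p μ =
      ENNReal.ofReal |(c ^ finrank ℝ V)⁻¹| ^ (1 / p).toReal * eLpNorm G p μ := by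
  have hmap := (measurableEmbedding_const_smul₀ hc).eLpNorm_map_measure (μ := μ) (g := G) (p := p)
  rw [Measure.map_addHaar_smul μ hc, eLpNorm_smul_measure_of_ne_top hp] at hmap
  exact hmap.symm

variable {n : ℕ}

lemma jap_rpow (x : Euc n) (b : ℝ) : jap x ^ b = (1 + ‖x‖ ^ 2) ^ (b / 2) := by
  rw [jap, Real.sqrt_eq_rpow, ← Real.rpow_mul (by positivity)]
  ring_nf

lemma ft_eq_fourier (q : Euc n → ℂ) (ξ : Euc n) : ft q ξ = 𝓕 q ((2 * Real.pi)⁻¹ • ξ) := by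
  rw [Real.fourier_eq', ft]
  congr! 2 with x
  rw [inner_smul_right, real_inner_comm, smul_eq_mul]
  congr 2
  push_cast
  field_simp

/-- The Fourier transform `ft` of a Schwartz function, as a Schwartz function. -/
def ftSchwartz (q : 𝓢(Euc n, ℂ)) : 𝓢(Euc n, ℂ) :=
  SchwartzMap.compCLMOfContinuousLinearEquiv ℂ
    (ContinuousLinearEquiv.smulLeft (Units.mk0 (2 * Real.pi)⁻¹ (by positivity))) (𝓕 q)

lemma ftSchwartz_apply (q : 𝓢(Euc n, ℂ)) (ξ : Euc n) : ftSchwartz q ξ = ft q ξ := by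
  rw [ft_eq_fourier, ← SchwartzMap.fourier_coe]
  rfl

/-- The Schwartz function `⟨ξ⟩^β q̂(ξ)`, the Fourier transform of `⟨D⟩^β q`. -/
def besselTransform (β : ℝ) (q : 𝓢(Euc n, ℂ)) : 𝓢(Euc n, ℂ) :=
  SchwartzMap.smulLeftCLM ℂ (fun x : Euc n ↦ (1 + ‖x‖ ^ 2) ^ (β / 2)) (ftSchwartz q)

lemma besselTransform_apply (β : ℝ) (q : 𝓢(Euc n, ℂ)) (ξ : Euc n) :
    besselTransform β q ξ = (1 + ‖ξ‖ ^ 2) ^ (β / 2) • ftSchwartz q ξ :=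
  SchwartzMap.smulLeftCLM_apply_apply
    (Function.hasTemperateGrowth_one_add_norm_sq_rpow (Euc n) (β / 2)) _ ξ

lemma ft_eq_rpow_smul_besselTransform (β : ℝ) (q : 𝓢(Euc n, ℂ)) (ξ : Euc n) :
    ft q ξ = (1 + ‖ξ‖ ^ 2) ^ (-β / 2) • besselTransform β q ξ := by
  rw [besselTransform_apply, smul_smul, ← Real.rpow_add (by positivity), neg_div,
    neg_add_cancel, Real.rpow_zero, one_smul, ftSchwartz_apply]

lemma fourierInv_besselTransform (β : ℝ) (q : 𝓢(Euc n, ℂ)) (y : Euc n) :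
    𝓕⁻ (besselTransform β q) y = (2 * Real.pi) ^ n • besselD β q ((2 * Real.pi) • y) := by
  rw [SchwartzMap.fourierInv_coe, Real.fourierInv_eq', besselD, smul_smul,
    mul_inv_cancel₀ (by positivity), one_smul]
  congr! 2 with ξ
  rw [besselTransform_apply, ftSchwartz_apply, jap_rpow, smul_eq_mul, inner_smul_right,
    Complex.real_smul]
  congr 2
  push_cast
  ring

lemma exists_eLpNorm_fourierInv_besselTransform_le (n : ℕ) (β : ℝ) :
    ∃ C : ℝ≥0, ∀ q : 𝓢(Euc n, ℂ),
      eLpNorm (fun y ↦ √(1 + ‖(2 * Real.pi) • y‖ ^ 2) ^ 2 • 𝓕⁻ (besselTransform β q) y)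
          2 volume ≤
        C * wSobNorm β 2 q := by
  set D : ℝ≥0∞ := ‖(2 * Real.pi) ^ n‖ₑ *
    ENNReal.ofReal |((2 * Real.pi) ^ finrank ℝ (Euc n))⁻¹| ^ (1 / 2 : ℝ≥0∞).toReal
  have hD_ne_top : D ≠ ∞ := by
    refine ENNReal.mul_ne_top enorm_ne_top (ENNReal.rpow_ne_top_of_nonneg ?_ ENNReal.ofReal_ne_top)
    positivity
  refine ⟨D.toNNReal, fun q ↦ ?_⟩
  have hscale : (fun y : Euc n ↦
      √(1 + ‖(2 * Real.pi) • y‖ ^ 2) ^ 2 • 𝓕⁻ (besselTransform β q) y) =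
      (2 * Real.pi) ^ n • fun y : Euc n ↦
        (fun x ↦ (jap x ^ (2 : ℝ) : ℝ) • besselD β q x) ((2 * Real.pi) • y) := by
    ext y
    simp only [Pi.smul_apply]
    rw [fourierInv_besselTransform, smul_comm, Real.rpow_two, jap]
  rw [hscale, eLpNorm_const_smul, eLpNorm_comp_smul volume (by positivity) ENNReal.ofNat_ne_top
      fun x ↦ (jap x ^ (2 : ℝ) : ℝ) • besselD β q x,
    ENNReal.coe_toNNReal hD_ne_top, ← mul_assoc, wSobNorm]

theorem exists_lineMajorant_ft (n : ℕ) (β : ℝ) :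
    ∃ C : ℝ≥0, ∀ q : 𝓢(Euc n, ℂ), ∃ E : Euc n → ℝ, Continuous E ∧ MemLp E 2 volume ∧
      eLpNorm E 2 volume ≤ C * wSobNorm β 2 q ∧
      LineMajorant 2 (fun ξ ↦ jap ξ ^ (-β) * E ξ) (ft q) := by
  obtain ⟨C, hC⟩ := exists_eLpNorm_fourierInv_besselTransform_le n β
  set b := EuclideanSpace.basisFun (Fin n) ℝ
  set K : ℝ := (2 * |-β / 2| + 3) ^ 2 with hK
  set S : ℕ := ∑ j ∈ Finset.range (2 + 1), Fintype.card (Fin j → Fin n)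
  refine ⟨‖K‖₊ * S * C, fun q ↦ ?_⟩
  set h := besselTransform β q
  refine ⟨fun ξ ↦ K * sobolevDensity b 2 h ξ, (continuous_sobolevDensity b 2 h).const_mul K,
    (memLp_sobolevDensity b 2 h).const_mul K, ?_, ?_⟩
  · change eLpNorm (K • sobolevDensity b 2 h) 2 volume ≤ _
    rw [eLpNorm_const_smul]
    push_cast
    rw [mul_assoc, mul_assoc]
    gcongr
    · exact le_rfl
    · exact (eLpNorm_sobolevDensity_le b 2 h).trans (by gcongr; exact hC q)
  · have hm := (lineMajorant_sobolevDensity b 2 h).one_add_norm_sq_rpow_smul (-β / 2)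
    rw [← funext (ft_eq_rpow_smul_besselTransform β q)] at hm
    simpa only [jap_rpow, hK, mul_left_comm] using hm

end FourierTransform

section Dispersion

variable {n : ℕ}

/-- The point `η/2 + r(‖η‖/2)θ`, which lies on the Ewald sphere `Γ_r(η)` when `‖θ‖ = 1`. -/
def ewaldRay (η θ : Euc n) (r : ℝ) : Euc n := (2 : ℝ)⁻¹ • η + (r * (‖η‖ / 2)) • θ

/-- The product `F(ξ)F(η - ξ)` at the point `ξ` of direction `θ` of the Ewald sphere `Γ_r(η)`. -/
def ewaldProduct {A : Type*} [Mul A] (F : Euc n → A) (η θ : Euc n) (r : ℝ) : A :=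
  F (ewaldRay η θ r) * F (η - ewaldRay η θ r)

/-- The decay factor `(1 + |‖ξ - η/2‖ - ‖η‖/2|)⁻¹` away from the Ewald sphere `Γ_1(η)`. -/
def ewaldDecay (η ξ : Euc n) : ℝ := (1 + |‖ξ - (2 : ℝ)⁻¹ • η‖ - ‖η‖ / 2|)⁻¹

/-- The bilinear expression `∫ ewaldDecay η ξ m(ξ) m(η - ξ) dξ` majorizing the dispersion operator
of a function with line majorant `m`. -/
def ewaldConvolution (m : Euc n → ℝ) (η : Euc n) : ℝ≥0∞ :=
  ∫⁻ ξ, ENNReal.ofReal (ewaldDecay η ξ * (m ξ * m (η - ξ)))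

/-- The integrand of `ewaldMean`, as a function of the direction `θ` and the radius `r`. -/
def ewaldIntegrand (F : Euc n → ℂ) (η θ : Euc n) (r : ℝ) : ℂ :=
  radialWeight (n - 1) r • ewaldProduct F η θ r

/-- The spherical operator `Sr r q` up to the factor `(2/‖η‖)(‖η‖/2)^(n-1)`, with an arbitrary
function `F` in place of the Fourier transform of `q`. -/
def ewaldMean (F : Euc n → ℂ) (η : Euc n) (r : ℝ) : ℂ :=
  ∫ θ : sphere (0 : Euc n) 1, ewaldIntegrand F η θ r ∂sphereMeasure (Euc n)

lemma Sr_eq_smul_ewaldMean [NeZero n] (q : Euc n → ℂ) {η : Euc n} (hη : η ≠ 0) {r : ℝ}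
    (hr : 0 < r) :
    Sr r q η = (2 / ‖η‖ * (‖η‖ / 2) ^ (n - 1)) • ewaldMean (ft q) η r := by
  simp only [ewaldMean, ewaldIntegrand]
  rw [Sr, integral_ewaldM hr hη, smul_smul, integral_smul, smul_smul]
  congr 1
  rw [radialWeight, mul_pow]
  field_simp

lemma ewaldDecay_nonneg (η ξ : Euc n) : 0 ≤ ewaldDecay η ξ := by unfold ewaldDecay; positivity

lemma ewaldDecay_le_one (η ξ : Euc n) : ewaldDecay η ξ ≤ 1 :=
  inv_le_one_of_one_le₀ (by linarith [abs_nonneg (‖ξ - (2 : ℝ)⁻¹ • η‖ - ‖η‖ / 2)])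

lemma continuous_ewaldDecay (η : Euc n) : Continuous (ewaldDecay η) := by
  unfold ewaldDecay
  exact Continuous.inv₀ (by fun_prop) fun z ↦ by positivity

lemma continuous_ewaldProduct {A : Type*} [TopologicalSpace A] [Mul A] [ContinuousMul A]
    {F : Euc n → A} (hF : Continuous F) (η : Euc n) :
    Continuous fun z : Euc n × ℝ ↦ ewaldProduct F η z.1 z.2 := by
  unfold ewaldProduct ewaldRay
  fun_prop

lemma LineMajorant.derivMajorant_ewaldProduct {m : Euc n → ℝ} {F : Euc n → ℂ} {k : ℕ}
    (h : LineMajorant k m F) (η : Euc n) {θ : Euc n} (hθ : ‖θ‖ = 1) :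
    DerivMajorant k (max 1 ‖η‖) (ewaldProduct m η θ) (ewaldProduct F η θ) := by
  have hray (r : ℝ) : ewaldRay η θ r = (2 : ℝ)⁻¹ • η + r • (‖η‖ / 2) • θ := by
    rw [ewaldRay, mul_smul]
  have hsub (r : ℝ) : η - ewaldRay η θ r = (η - (2 : ℝ)⁻¹ • η) + r • -((‖η‖ / 2) • θ) := by
    rw [hray, smul_neg]; abel
  have hfreq : ‖(‖η‖ / 2) • θ‖ + ‖-((‖η‖ / 2) • θ)‖ = ‖η‖ := by
    rw [norm_neg, norm_smul, hθ, Real.norm_of_nonneg (by positivity)]; ring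
  have hmul := (h ((2 : ℝ)⁻¹ • η) ((‖η‖ / 2) • θ)).smul
    (h (η - (2 : ℝ)⁻¹ • η) (-((‖η‖ / 2) • θ)))
  rw [hfreq] at hmul
  simp only [← hray, ← hsub, smul_eq_mul] at hmul
  exact hmul.mono (norm_nonneg η) (le_max_right _ _) fun _ ↦ le_rfl

lemma inv_one_add_mul_abs_le_ewaldDecay (η : Euc n) {θ : Euc n} (hθ : ‖θ‖ = 1) {r : ℝ}
    (hr : 0 ≤ r) : (1 + max 1 ‖η‖ * |r - 1|)⁻¹ ≤ ewaldDecay η (ewaldRay η θ r) := by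
  have hdist : ‖ewaldRay η θ r - (2 : ℝ)⁻¹ • η‖ - ‖η‖ / 2 = ‖η‖ / 2 * (r - 1) := by
    rw [ewaldRay, add_sub_cancel_left, norm_smul, hθ, Real.norm_of_nonneg (by positivity)]
    ring
  rw [ewaldDecay, hdist, abs_mul, abs_of_nonneg (by positivity : 0 ≤ ‖η‖ / 2)]
  gcongr
  linarith [le_max_right 1 ‖η‖, norm_nonneg η]

lemma ofReal_pvWeight_ewaldProduct_le {m : Euc n → ℝ} (hm : ∀ ξ, 0 ≤ m ξ) (η : Euc n)
    {θ : Euc n} (hθ : ‖θ‖ = 1) (k : ℕ) {r : ℝ} (hr : 0 ≤ r) :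
    ENNReal.ofReal (pvWeight k (max 1 ‖η‖) (ewaldProduct m η θ) r) ≤
      ENNReal.ofReal (r ^ k) * ENNReal.ofReal (ewaldDecay η (ewaldRay η θ r) *
        (m (ewaldRay η θ r) * m (η - ewaldRay η θ r))) := by
  rw [← ENNReal.ofReal_mul (by positivity), pvWeight, ewaldProduct]
  have := mul_nonneg (hm (ewaldRay η θ r)) (hm (η - ewaldRay η θ r))
  gcongr
  exact inv_one_add_mul_abs_le_ewaldDecay η hθ hr

lemma exists_lintegral_pvWeight_ewaldProduct_le (n : ℕ) [NeZero n] :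
    ∃ C : ℝ≥0, ∀ m : Euc n → ℝ, Continuous m → (∀ ξ, 0 ≤ m ξ) → ∀ η : Euc n, η ≠ 0 →
      ∫⁻ θ : sphere (0 : Euc n) 1, (∫⁻ r in Ioi 0,
          ENNReal.ofReal (pvWeight (n - 1) (max 1 ‖η‖) (ewaldProduct m η θ) r))
          ∂sphereMeasure (Euc n) ≤
        C * (ENNReal.ofReal (((‖η‖ / 2) ^ n)⁻¹) * ewaldConvolution m η) := by
  obtain ⟨C, hC⟩ := exists_lintegral_sphereMeasure_le (volume : Measure (Euc n))
  rw [finrank_euclideanSpace_fin] at hC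
  refine ⟨C, fun m hm hm0 η hη ↦ ?_⟩
  have hdecay := continuous_ewaldDecay η
  set g : Euc n → ℝ≥0∞ := fun ξ ↦ ENNReal.ofReal (ewaldDecay η ξ * (m ξ * m (η - ξ)))
  have hgm : Measurable g := by fun_prop
  have hρ : 0 < ‖η‖ / 2 := half_pos (norm_pos_iff.2 hη)
  calc _ ≤ ∫⁻ θ : sphere (0 : Euc n) 1, (∫⁻ r in Ioi (0 : ℝ), ENNReal.ofReal (r ^ (n - 1)) *
          g (ewaldRay η θ r)) ∂sphereMeasure (Euc n) :=
        lintegral_mono fun θ ↦ setLIntegral_mono' measurableSet_Ioi fun r hr ↦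
          ofReal_pvWeight_ewaldProduct_le hm0 η (norm_eq_of_mem_sphere θ) _ (le_of_lt hr)
    _ ≤ _ := hC g ((2 : ℝ)⁻¹ • η) (‖η‖ / 2) hgm hρ

lemma ewaldConvolution_lt_top {m : Euc n → ℝ} (hm0 : ∀ ξ, 0 ≤ m ξ)
    (hm2 : MemLp m 2 volume) (η : Euc n) : ewaldConvolution m η < ∞ := by
  have hint : Integrable (fun ξ ↦ m ξ * m (η - ξ)) volume :=
    hm2.integrable_mul (hm2.comp_measurePreserving (Measure.measurePreserving_sub_left volume η))
  refine lt_of_le_of_lt (lintegral_mono fun ξ ↦ ENNReal.ofReal_le_ofReal ?_) hint.lintegral_lt_top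
  exact mul_le_of_le_one_left (mul_nonneg (hm0 _) (hm0 _)) (ewaldDecay_le_one η ξ)

lemma measurable_pvIntegrand {Θ E : Type*} [MeasurableSpace Θ] [NormedAddCommGroup E]
    [NormedSpace ℝ E] [MeasurableSpace E] [BorelSpace E] [SecondCountableTopology E] (δ : ℝ)
    {φ : Θ → ℝ → E} (hφ : Measurable fun z : Θ × ℝ ↦ φ z.1 z.2) :
    Measurable fun z : Θ × ℝ ↦ pvIntegrand δ (φ z.1) z.2 := by
  have hind : Measurable fun z : Θ × ℝ ↦ (closedBall (1 : ℝ) δ).indicator (fun _ ↦ φ z.1 1) z.2 :=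
    (hφ.comp (measurable_fst.prodMk measurable_const)).indicator
      (measurable_snd measurableSet_closedBall)
  exact (measurable_const.sub measurable_snd).inv.smul (hφ.sub hind)

variable {m : Euc n → ℝ} {F : Euc n → ℂ}

lemma measurable_ewaldIntegrand (hF : Continuous F) (η : Euc n) :
    Measurable fun z : sphere (0 : Euc n) 1 × ℝ ↦ ewaldIntegrand F η z.1 z.2 :=
  ((measurable_radialWeight (n - 1)).comp measurable_snd).smul
    ((continuous_ewaldProduct hF η).comp
      ((continuous_subtype_val.comp continuous_fst).prodMk continuous_snd)).measurable

lemma integrable_ewaldIntegrand [NeZero n] (hF : Continuous F) (η : Euc n) (r : ℝ) :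
    Integrable (fun θ : sphere (0 : Euc n) 1 ↦ ewaldIntegrand F η θ r)
      (sphereMeasure (Euc n)) := by
  have hprod : Continuous fun θ : sphere (0 : Euc n) 1 ↦ ewaldProduct F η θ r :=
    (continuous_ewaldProduct hF η).comp (continuous_subtype_val.prodMk continuous_const)
  have hcont := hprod.const_smul (radialWeight (n - 1) r)
  exact hcont.integrable_of_hasCompactSupport (HasCompactSupport.of_compactSpace _)

lemma exists_lintegral_ewaldIntegrand_le (n : ℕ) [NeZero n] :
    ∃ C : ℝ≥0, ∀ (m : Euc n → ℝ) (F : Euc n → ℂ), Continuous m → LineMajorant 2 m F →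
      ∀ η : Euc n, η ≠ 0 →
        ∫⁻ θ : sphere (0 : Euc n) 1, (ENNReal.ofReal Real.pi * ‖ewaldIntegrand F η θ 1‖ₑ +
            ∫⁻ r in Ioi 0, ‖pvIntegrand (2 * max 1 ‖η‖)⁻¹ (ewaldIntegrand F η θ) r‖ₑ)
            ∂sphereMeasure (Euc n) ≤
          C * ENNReal.ofReal (max 1 ‖η‖ * ((‖η‖ / 2) ^ n)⁻¹) * ewaldConvolution m η := by
  obtain ⟨K, hK, hradial⟩ := exists_enorm_add_lintegral_pvIntegrand_le (E := ℂ) (n - 1)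
  obtain ⟨C, hC⟩ := exists_lintegral_pvWeight_ewaldProduct_le n
  refine ⟨K.toNNReal * C, fun m F hm hF η hη ↦ ?_⟩
  have hray (θ : sphere (0 : Euc n) 1) := hradial (max 1 ‖η‖) (ewaldProduct m η θ)
    (ewaldProduct F η θ) (le_max_left _ _)
    ((continuous_ewaldProduct hm η).comp (Continuous.prodMk_right _))
    (hF.derivMajorant_ewaldProduct η (norm_eq_of_mem_sphere θ))
  refine (lintegral_mono hray).trans ?_
  rw [lintegral_const_mul' _ _ ENNReal.ofReal_ne_top]
  refine (mul_le_mul_right (hC m hm hF.nonneg η hη) _).trans_eq ?_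
  rw [ENNReal.ofReal_mul hK.le, ENNReal.ofReal_mul (by positivity), ENNReal.coe_mul,
    ENNReal.ofReal]
  ring

theorem exists_tendsto_ewaldMean (n : ℕ) [NeZero n] :
    ∃ C : ℝ≥0, ∀ (m : Euc n → ℝ) (F : Euc n → ℂ), Continuous m → MemLp m 2 volume →
      Continuous F → LineMajorant 2 m F → ∀ η : Euc n, η ≠ 0 → ∃ P : ℂ,
        Tendsto (fun ε ↦ ∫ r in Ioi 0 \ closedBall 1 ε, (1 - r)⁻¹ • ewaldMean F η r)
          (𝓝[>] 0) (𝓝 P) ∧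
        ‖(Real.pi : ℂ) * Complex.I * ewaldMean F η 1 + P‖ₑ ≤
          C * ENNReal.ofReal (max 1 ‖η‖ * ((‖η‖ / 2) ^ n)⁻¹) * ewaldConvolution m η := by
  obtain ⟨C, hC⟩ := exists_lintegral_ewaldIntegrand_le n
  refine ⟨C, fun m F hm hm2 hF hmF η hη ↦ ?_⟩
  set σ := sphereMeasure (Euc n)
  set δ : ℝ := (2 * max 1 ‖η‖)⁻¹
  set φ : sphere (0 : Euc n) 1 → ℝ → ℂ := fun θ ↦ ewaldIntegrand F η θ
  have hδ : δ < 1 := inv_lt_one_of_one_lt₀ (by linarith [le_max_left 1 ‖η‖])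
  have hint (r : ℝ) (_ : r > 0) : Integrable (fun θ ↦ φ θ r) σ :=
    integrable_ewaldIntegrand hF η r
  have hpv : StronglyMeasurable fun z : sphere (0 : Euc n) 1 × ℝ ↦ pvIntegrand δ (φ z.1) z.2 :=
    (measurable_pvIntegrand δ (measurable_ewaldIntegrand hF η)).stronglyMeasurable
  have hbound : (∫⁻ θ, ENNReal.ofReal Real.pi * ‖φ θ 1‖ₑ ∂σ) +
      ∫⁻ θ, (∫⁻ r in Ioi 0, ‖pvIntegrand δ (φ θ) r‖ₑ) ∂σ ≤
        C * ENNReal.ofReal (max 1 ‖η‖ * ((‖η‖ / 2) ^ n)⁻¹) * ewaldConvolution m η := by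
    rw [← lintegral_add_right _ hpv.enorm.lintegral_prod_right']
    exact hC m F hm hmF η hη
  have hfin : ∫⁻ θ, (∫⁻ r in Ioi 0, ‖pvIntegrand δ (φ θ) r‖ₑ) ∂σ ≠ ∞ :=
    ne_top_of_le_ne_top (ENNReal.mul_ne_top (by finiteness)
      (ewaldConvolution_lt_top hmF.nonneg hm2 η).ne) (le_add_self.trans hbound)
  refine ⟨_, tendsto_setIntegral_pvIntegrand hδ (integrableOn_pvIntegrand_integral hint hpv hfin),
    le_trans ?_ hbound⟩
  refine (enorm_add_le _ _).trans
    (add_le_add ?_ (enorm_integral_pvIntegrand_integral_le hint hpv))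
  rw [lintegral_const_mul' _ _ ENNReal.ofReal_ne_top, enorm_mul]
  gcongr
  · simp [← ofReal_norm, abs_of_pos Real.pi_pos]
  · exact enorm_integral_le_lintegral_enorm _

theorem exists_tendsto_Sr (n : ℕ) [NeZero n] :
    ∃ C : ℝ≥0, ∀ (m : Euc n → ℝ) (q : Euc n → ℂ), Continuous m → MemLp m 2 volume →
      Continuous (ft q) → LineMajorant 2 m (ft q) → ∀ η : Euc n, η ≠ 0 → ∃ P : ℂ,
        Tendsto (fun ε ↦ ∫ r in {r : ℝ | 0 < r ∧ ε < |1 - r|}, Sr r q η / ((1 - r : ℝ) : ℂ))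
          (𝓝[>] 0) (𝓝 P) ∧
        ‖(Real.pi : ℂ) * Complex.I * Sr 1 q η + P‖ₑ ≤
          C * ENNReal.ofReal (max 1 ‖η‖ * (‖η‖ ^ 2)⁻¹) * ewaldConvolution m η := by
  obtain ⟨C, hC⟩ := exists_tendsto_ewaldMean n
  refine ⟨4 * C, fun m q hm hm2 hq hmq η hη ↦ ?_⟩
  obtain ⟨P, hP, hbound⟩ := hC m (ft q) hm hm2 hq hmq η hη
  have := norm_pos_iff.2 hη
  set c : ℝ := 2 / ‖η‖ * (‖η‖ / 2) ^ (n - 1) with hc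
  have hset (ε : ℝ) : {r : ℝ | 0 < r ∧ ε < |1 - r|} = Ioi 0 \ closedBall 1 ε := by
    ext r
    simp only [mem_ofPred_eq, Set.mem_sdiff, mem_Ioi, mem_closedBall, Real.dist_eq, not_le,
      abs_sub_comm r 1]
  have hSr (ε : ℝ) : ∫ r in {r : ℝ | 0 < r ∧ ε < |1 - r|}, Sr r q η / ((1 - r : ℝ) : ℂ) =
      c • ∫ r in Ioi 0 \ closedBall 1 ε, (1 - r)⁻¹ • ewaldMean (ft q) η r := by
    rw [hset, ← integral_smul]
    refine setIntegral_congr_fun (measurableSet_Ioi.diff measurableSet_closedBall) fun r hr ↦ ?_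
    rw [Sr_eq_smul_ewaldMean q hη hr.1, ← hc, div_eq_inv_mul, ← Complex.ofReal_inv,
      ← Complex.real_smul, smul_comm]
  have hfactor : c * (max 1 ‖η‖ * ((‖η‖ / 2) ^ n)⁻¹) = 4 * (max 1 ‖η‖ * (‖η‖ ^ 2)⁻¹) := by
    rw [hc, ← mul_pow_sub_one (NeZero.ne n) (‖η‖ / 2)]
    field_simp
    norm_num
  refine ⟨c • P, by simpa only [hSr] using hP.const_smul c, ?_⟩
  rw [Sr_eq_smul_ewaldMean q hη one_pos, mul_smul_comm, ← smul_add, enorm_smul]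
  refine (mul_le_mul_right hbound _).trans_eq ?_
  rw [Real.enorm_of_nonneg (by positivity), ← mul_assoc, mul_left_comm,
    ← ENNReal.ofReal_mul (by positivity), hfactor, ENNReal.ofReal_mul (by positivity)]
  push_cast
  simp only [ENNReal.ofReal_ofNat]
  ring

end Dispersion

section LineIntegrals

lemma lintegral_inv_one_add_abs_sq_lt_top :
    ∫⁻ x : ℝ, ENNReal.ofReal ((1 + |x|)⁻¹ ^ 2) < ∞ := by
  have hint : Integrable (fun x : ℝ ↦ (1 + ‖x‖) ^ (-2 : ℝ)) := integrable_one_add_norm (by simp)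
  refine lt_of_eq_of_lt (lintegral_congr fun x ↦ ?_) hint.lintegral_lt_top
  rw [Real.rpow_neg (by positivity), Real.rpow_two, Real.norm_eq_abs, inv_pow]

lemma exists_setLIntegral_inv_one_add_abs_sq_le (K : ℝ≥0) :
    ∃ C : ℝ≥0, ∀ (s : Set ℝ) (t : ℝ → ℝ), (∀ x ∈ s, ∀ y ∈ s, |x - y| ≤ K * |t x - t y|) →
      ∫⁻ x in s, ENNReal.ofReal ((1 + |t x|)⁻¹ ^ 2) ≤ C := by
  set I := ∫⁻ x : ℝ, ENNReal.ofReal ((1 + |x|)⁻¹ ^ 2)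
  have hI : I < ∞ := lintegral_inv_one_add_abs_sq_lt_top
  set c : ℝ := (1 + 2 * K) ^ 2
  refine ⟨(ENNReal.ofReal c * I).toNNReal, fun s t ht ↦ ?_⟩
  rw [ENNReal.coe_toNNReal (by finiteness)]
  rcases s.eq_empty_or_nonempty with rfl | ⟨y₀, hy₀⟩
  · simp
  -- A point of `s` where `|t|` is minimal up to `1` serves as the origin of the line.
  obtain ⟨_, ⟨x₀, hx₀, rfl⟩, hlt⟩ := exists_lt_of_csInf_lt
    (Set.Nonempty.image (fun x ↦ |t x|) ⟨y₀, hy₀⟩) (lt_add_one (sInf ((fun x ↦ |t x|) '' s)))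
  have hmin (x : ℝ) (hx : x ∈ s) : |t x₀| < |t x| + 1 := hlt.trans_le <| by
    gcongr
    exact csInf_le ⟨0, by rintro _ ⟨y, -, rfl⟩; exact abs_nonneg _⟩ (mem_image_of_mem _ hx)
  have hx (x : ℝ) (hx : x ∈ s) : (1 + |t x|)⁻¹ ^ 2 ≤ c * (1 + |x - x₀|)⁻¹ ^ 2 := by
    have hdist : 1 + |x - x₀| ≤ (1 + 2 * K) * (1 + |t x|) := by
      have := mul_le_mul_of_nonneg_left (abs_sub (t x) (t x₀)) K.coe_nonneg
      have := mul_le_mul_of_nonneg_left (hmin x hx).le K.coe_nonneg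
      nlinarith [ht x hx x₀ hx₀, abs_nonneg (t x), K.coe_nonneg]
    rw [← mul_pow, ← div_eq_mul_inv]
    gcongr
    rwa [inv_le_comm₀ (by positivity) (by positivity), inv_div, div_le_iff₀' (by positivity)]
  calc _ ≤ ∫⁻ x in s, ENNReal.ofReal (c * (1 + |x - x₀|)⁻¹ ^ 2) :=
        setLIntegral_mono (by fun_prop) fun x hxs ↦ ENNReal.ofReal_le_ofReal (hx x hxs)
    _ ≤ ∫⁻ x, ENNReal.ofReal c * ENNReal.ofReal ((1 + |x - x₀|)⁻¹ ^ 2) := by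
        refine (setLIntegral_le_lintegral _ _).trans_eq ?_
        simp only [ENNReal.ofReal_mul (sq_nonneg (1 + 2 * (K : ℝ))), c]
    _ = _ := by
        rw [lintegral_const_mul' _ _ ENNReal.ofReal_ne_top,
          lintegral_sub_right_eq_self (fun x : ℝ ↦ ENNReal.ofReal ((1 + |x|)⁻¹ ^ 2))]

lemma mul_abs_le_abs_norm_sub_norm {E : Type*} [NormedAddCommGroup E] [InnerProductSpace ℝ E]
    {a b e : E} {κ d : ℝ} (hκ : 0 < κ) (he : ‖e‖ = 1) (hab : a - b = d • e)
    (ha : κ * ‖a‖ ≤ ⟪e, a⟫) (hb : κ * ‖b‖ ≤ ⟪e, b⟫) : κ * |d| ≤ |‖a‖ - ‖b‖| := by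
  have hsq : (‖a‖ - ‖b‖) * (‖a‖ + ‖b‖) = d * ⟪e, a + b⟫ := by
    rw [← real_inner_smul_left, ← hab, inner_sub_left, inner_add_right, inner_add_right,
      real_inner_self_eq_norm_sq, real_inner_self_eq_norm_sq, real_inner_comm a b]
    ring
  have hsq' : |‖a‖ - ‖b‖| * (‖a‖ + ‖b‖) = |d| * |⟪e, a + b⟫| := by
    rw [← abs_mul, ← hsq, abs_mul, abs_of_nonneg (a := ‖a‖ + ‖b‖) (by positivity)]
  have hinner : κ * (‖a‖ + ‖b‖) ≤ |⟪e, a + b⟫| := by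
    rw [inner_add_right]
    linarith [le_abs_self (⟪e, a⟫ + ⟪e, b⟫)]
  rcases (by positivity : 0 ≤ ‖a‖ + ‖b‖).eq_or_lt with h0 | hpos
  · have hd : |d| = ‖a - b‖ := by rw [hab, norm_smul, he, mul_one, Real.norm_eq_abs]
    have := mul_le_mul_of_nonneg_left (norm_sub_le a b) hκ.le
    rw [hd]
    exact this.trans (by rw [← h0, mul_zero]; positivity)
  · refine le_of_mul_le_mul_right ?_ hpos
    nlinarith [mul_le_mul_of_nonneg_left hinner (abs_nonneg d)]

end LineIntegrals

section JapaneseBracket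

variable {n : ℕ}

lemma norm_inv_two_smul (v : Euc n) : ‖(2 : ℝ)⁻¹ • v‖ = ‖v‖ / 2 := by
  rw [norm_smul, norm_inv, Real.norm_two, inv_mul_eq_div]

@[fun_prop]
lemma measurable_jap : Measurable (jap : Euc n → ℝ) := by unfold jap; fun_prop

lemma jap_sq (ξ : Euc n) : jap ξ ^ 2 = 1 + ‖ξ‖ ^ 2 := Real.sq_sqrt (by positivity)

lemma jap_pos (ξ : Euc n) : 0 < jap ξ := by unfold jap; positivity

lemma one_le_jap (ξ : Euc n) : 1 ≤ jap ξ := by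
  rw [← one_le_sq_iff₀ (jap_pos ξ).le, jap_sq]
  linarith [sq_nonneg ‖ξ‖]

lemma norm_le_jap (ξ : Euc n) : ‖ξ‖ ≤ jap ξ := Real.le_sqrt_of_sq_le (by linarith)

lemma jap_le_two_mul_norm {ξ : Euc n} (hξ : 1 ≤ ‖ξ‖) : jap ξ ≤ 2 * ‖ξ‖ :=
  Real.sqrt_le_iff.2 ⟨by positivity, by nlinarith⟩

lemma jap_le_one_add_norm (ξ : Euc n) : jap ξ ≤ 1 + ‖ξ‖ :=
  Real.sqrt_le_iff.2 ⟨by positivity, by nlinarith [norm_nonneg ξ]⟩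

lemma jap_le_jap {ξ η : Euc n} (h : ‖ξ‖ ≤ ‖η‖) : jap ξ ≤ jap η :=
  Real.sqrt_le_sqrt (by gcongr)

lemma jap_sub_le (ξ v : Euc n) : jap (ξ - v) ≤ jap ξ + ‖v‖ := by
  refine Real.sqrt_le_iff.2 ⟨add_nonneg (jap_pos ξ).le (norm_nonneg v), ?_⟩
  nlinarith [norm_sub_le ξ v, norm_nonneg (ξ - v), norm_nonneg v, jap_sq ξ,
    mul_le_mul_of_nonneg_right (norm_le_jap ξ) (norm_nonneg v)]

lemma lintegral_jap_rpow_lt_top {s : ℝ} (hs : n < s) :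
    ∫⁻ ξ : Euc n, ENNReal.ofReal (jap ξ ^ (-s)) < ∞ := by
  simp only [jap_rpow]
  exact (integrable_rpow_neg_one_add_norm_sq
    (by rwa [finrank_euclideanSpace_fin])).lintegral_lt_top

lemma jap_rpow_one_sub_le_lintegral {s : ℝ} (hs : 0 ≤ s) {e : Euc n} (he : ‖e‖ = 1)
    (ζ : Euc n) : ENNReal.ofReal (jap ζ ^ (1 - s)) ≤
      ENNReal.ofReal (2 ^ s) * ∫⁻ x : ℝ, ENNReal.ofReal (jap (ζ - x • e) ^ (-s)) := by
  have hJ := jap_pos ζ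
  have hsegment : ∫⁻ _ in Icc 0 (jap ζ), ENNReal.ofReal ((2 * jap ζ) ^ (-s)) ≤
      ∫⁻ x : ℝ, ENNReal.ofReal (jap (ζ - x • e) ^ (-s)) := by
    refine le_trans (setLIntegral_mono' measurableSet_Icc fun x hx ↦ ENNReal.ofReal_le_ofReal ?_)
      (setLIntegral_le_lintegral _ _)
    refine Real.rpow_le_rpow_of_nonpos (jap_pos _) ?_ (by linarith)
    have hle := jap_sub_le ζ (x • e)
    rw [norm_smul, he, mul_one, Real.norm_of_nonneg hx.1] at hle
    linarith [hx.2]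
  refine le_trans (le_of_eq ?_) (mul_le_mul_right hsegment _)
  rw [setLIntegral_const, Real.volume_Icc, sub_zero, ← ENNReal.ofReal_mul (by positivity),
    ← ENNReal.ofReal_mul (by positivity), Real.mul_rpow zero_le_two hJ.le, ← mul_assoc,
    ← mul_assoc, ← Real.rpow_add two_pos, add_neg_cancel, Real.rpow_zero, one_mul,
    ← Real.rpow_add_one hJ.ne', neg_add_eq_sub]

/- The power of `jap` is dominated by an average over a line in direction `e` of a power with one
more order of decay, which by Fubini transfers the averaging to `W`. -/
lemma exists_lintegral_mul_jap_rpow_le {s : ℝ} (hs : n < s) :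
    ∃ C : ℝ≥0, ∀ (W : Euc n → ℝ≥0∞) (e : Euc n) (B : ℝ≥0∞), Measurable W → ‖e‖ = 1 →
      (∀ ζ, ∫⁻ x : ℝ, W (ζ + x • e) ≤ B) →
        ∫⁻ ζ, W ζ * ENNReal.ofReal (jap ζ ^ (1 - s)) ≤ C * B := by
  set g : Euc n → ℝ≥0∞ := fun ξ ↦ ENNReal.ofReal (jap ξ ^ (-s))
  have hgm : Measurable g := by fun_prop
  have hI : ∫⁻ ξ, g ξ < ∞ := lintegral_jap_rpow_lt_top hs
  refine ⟨(ENNReal.ofReal (2 ^ s) * ∫⁻ ξ, g ξ).toNNReal, fun W e B hW he hB ↦ ?_⟩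
  rw [ENNReal.coe_toNNReal (by finiteness)]
  calc ∫⁻ ζ, W ζ * ENNReal.ofReal (jap ζ ^ (1 - s))
      ≤ ∫⁻ ζ, ENNReal.ofReal (2 ^ s) * ∫⁻ x : ℝ, W ζ * g (ζ - x • e) := by
        refine lintegral_mono fun ζ ↦ ?_
        rw [lintegral_const_mul _ (by fun_prop), mul_left_comm]
        gcongr
        exact jap_rpow_one_sub_le_lintegral ((Nat.cast_nonneg n).trans hs.le) he ζ
    _ = ENNReal.ofReal (2 ^ s) * ∫⁻ x : ℝ, (∫⁻ ζ, W ζ * g (ζ - x • e)) := by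
        rw [lintegral_const_mul' _ _ ENNReal.ofReal_ne_top, lintegral_lintegral_swap]
        exact Measurable.aemeasurable (by fun_prop)
    _ = ENNReal.ofReal (2 ^ s) * ∫⁻ x : ℝ, (∫⁻ ζ, W (ζ + x • e) * g ζ) := by
        congr 1
        refine lintegral_congr fun x ↦ ?_
        rw [← lintegral_add_right_eq_self _ (x • e)]
        simp only [add_sub_cancel_right]
    _ = ENNReal.ofReal (2 ^ s) * ∫⁻ ζ, (∫⁻ x : ℝ, W (ζ + x • e)) * g ζ := by
        rw [lintegral_lintegral_swap (Measurable.aemeasurable (by fun_prop))]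
        congr 1
        exact lintegral_congr fun ζ ↦ lintegral_mul_const _ (by fun_prop)
    _ ≤ ENNReal.ofReal (2 ^ s) * ∫⁻ ζ, B * g ζ := by
        gcongr with ζ
        exact hB ζ
    _ = _ := by rw [lintegral_const_mul _ hgm]; ring

end JapaneseBracket

section EwaldDecay

variable {n : ℕ}

lemma abs_le_two_mul_abs_norm_sub_norm {η ξ ζ : Euc n} {d : ℝ}
    (h : ξ - ζ = d • (‖η‖⁻¹ • η)) (hη : η ≠ 0) (hξ : ‖ξ‖ ≤ ‖η‖ / 8) (hζ : ‖ζ‖ ≤ ‖η‖ / 8) :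
    |d| ≤ 2 * |‖ξ - (2 : ℝ)⁻¹ • η‖ - ‖ζ - (2 : ℝ)⁻¹ • η‖| := by
  have hη0 := norm_pos_iff.2 hη
  set e : Euc n := -(‖η‖⁻¹ • η) with he
  have hen : ‖e‖ = 1 := by rw [he, norm_neg]; exact norm_smul_inv_norm (𝕜 := ℝ) hη
  have hcone (p : Euc n) (hp : ‖p‖ ≤ ‖η‖ / 8) :
      (1 / 2 : ℝ) * ‖p - (2 : ℝ)⁻¹ • η‖ ≤ ⟪e, p - (2 : ℝ)⁻¹ • η⟫ := by
    have hnorm : ‖p - (2 : ℝ)⁻¹ • η‖ ≤ ‖p‖ + ‖η‖ / 2 :=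
      (norm_sub_le _ _).trans_eq (by rw [norm_inv_two_smul])
    have hinner : ⟪e, p - (2 : ℝ)⁻¹ • η⟫ = ⟪e, p⟫ + ‖η‖ / 2 := by
      rw [inner_sub_right, he, inner_neg_left (x := ‖η‖⁻¹ • η) (y := (2 : ℝ)⁻¹ • η),
        real_inner_smul_left, real_inner_smul_right, real_inner_self_eq_norm_sq]
      field_simp
      ring
    have hp' : -‖p‖ ≤ ⟪e, p⟫ := by
      have := neg_le_of_abs_le (abs_real_inner_le_norm e p)
      rwa [hen, one_mul] at this
    linarith
  have := mul_abs_le_abs_norm_sub_norm (a := ξ - (2 : ℝ)⁻¹ • η) (b := ζ - (2 : ℝ)⁻¹ • η)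
    (d := -d) one_half_pos hen (by rw [sub_sub_sub_cancel_right, h, he, neg_smul_neg])
    (hcone ξ hξ) (hcone ζ hζ)
  rw [abs_neg] at this
  linarith

lemma exists_setLIntegral_ewaldDecay_sq_mul_jap_rpow_le {s : ℝ} (hs : n < s) :
    ∃ C : ℝ≥0, ∀ η : Euc n, η ≠ 0 → ∫⁻ ξ in closedBall 0 (‖η‖ / 8),
      ENNReal.ofReal (ewaldDecay η ξ ^ 2) * ENNReal.ofReal (jap ξ ^ (1 - s)) ≤ C := by
  obtain ⟨C, hC⟩ := exists_lintegral_mul_jap_rpow_le hs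
  obtain ⟨B, hB⟩ := exists_setLIntegral_inv_one_add_abs_sq_le 2
  refine ⟨C * B, fun η hη ↦ ?_⟩
  set e : Euc n := ‖η‖⁻¹ • η
  set s₀ : Set (Euc n) := closedBall 0 (‖η‖ / 8)
  have hdecay := (continuous_ewaldDecay η).measurable
  set W : Euc n → ℝ≥0∞ := s₀.indicator fun ξ ↦ ENNReal.ofReal (ewaldDecay η ξ ^ 2) with hW
  have hWm : Measurable W := Measurable.indicator (by fun_prop) measurableSet_closedBall
  have hline (ζ : Euc n) : ∫⁻ x : ℝ, W (ζ + x • e) ≤ B := by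
    set t : Set ℝ := (fun x ↦ ζ + x • e) ⁻¹' s₀
    have ht : MeasurableSet t := measurableSet_closedBall.preimage (by fun_prop)
    calc ∫⁻ x : ℝ, W (ζ + x • e)
        = ∫⁻ x in t, ENNReal.ofReal (ewaldDecay η (ζ + x • e) ^ 2) := by
          rw [← lintegral_indicator ht]; rfl
      _ ≤ B := hB t (fun x ↦ ‖ζ + x • e - (2 : ℝ)⁻¹ • η‖ - ‖η‖ / 2) fun x hx y hy ↦ by
          rw [sub_sub_sub_cancel_right]
          exact abs_le_two_mul_abs_norm_sub_norm
            (by rw [add_sub_add_left_eq_sub, ← sub_smul]) hη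
            (mem_closedBall_zero_iff.1 hx) (mem_closedBall_zero_iff.1 hy)
  calc _ = ∫⁻ ξ, W ξ * ENNReal.ofReal (jap ξ ^ (1 - s)) := by
        rw [← lintegral_indicator measurableSet_closedBall, hW]
        refine lintegral_congr fun ξ ↦ ?_
        rw [indicator_mul_left]
    _ ≤ _ := by
        rw [ENNReal.coe_mul]
        exact hC W e B hWm (norm_smul_inv_norm (𝕜 := ℝ) hη) hline

lemma exists_setLIntegral_ewaldDecay_sq_le (n : ℕ) [NeZero n] :
    ∃ C : ℝ≥0, ∀ η : Euc n, ∫⁻ ξ in closedBall ((2 : ℝ)⁻¹ • η) (2 * ‖η‖),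
      ENNReal.ofReal (ewaldDecay η ξ ^ 2) ≤ C * ENNReal.ofReal (‖η‖ ^ (n - 1)) := by
  set I := ∫⁻ x : ℝ, ENNReal.ofReal ((1 + |x|)⁻¹ ^ 2)
  have hI : I < ∞ := lintegral_inv_one_add_abs_sq_lt_top
  set T := (volume : Measure (Euc n)).toSphere univ
  have : T < ∞ := measure_lt_top _ _
  refine ⟨(2 ^ (n - 1) * T * I).toNNReal, fun η ↦ ?_⟩
  rw [ENNReal.coe_toNNReal (by finiteness)]
  set g : ℝ → ℝ≥0∞ := fun r ↦ ENNReal.ofReal ((1 + |r - ‖η‖ / 2|)⁻¹ ^ 2)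
  have hpre : closedBall ((2 : ℝ)⁻¹ • η) (2 * ‖η‖) =
      (· - (2 : ℝ)⁻¹ • η) ⁻¹' closedBall 0 (2 * ‖η‖) := by
    ext ξ
    simp only [mem_closedBall_iff_norm, mem_preimage, sub_zero]
  calc ∫⁻ ξ in closedBall ((2 : ℝ)⁻¹ • η) (2 * ‖η‖), ENNReal.ofReal (ewaldDecay η ξ ^ 2)
      = ∫⁻ ξ in closedBall (0 : Euc n) (2 * ‖η‖), g ‖ξ‖ := by
        rw [hpre]
        exact (measurePreserving_sub_right volume ((2 : ℝ)⁻¹ • η)).setLIntegral_comp_preimage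
          measurableSet_closedBall (f := fun ξ ↦ g ‖ξ‖) (by fun_prop)
    _ ≤ ENNReal.ofReal ((2 * ‖η‖) ^ (n - 1)) * T * ∫⁻ r, g r := by
        simpa only [finrank_euclideanSpace_fin] using
          lintegral_closedBall_comp_norm_le (volume : Measure (Euc n)) (f := g) (by fun_prop) _
    _ = _ := by
        rw [lintegral_sub_right_eq_self (fun r : ℝ ↦ ENNReal.ofReal ((1 + |r|)⁻¹ ^ 2)), mul_pow,
          ENNReal.ofReal_mul (by positivity), ENNReal.ofReal_pow zero_le_two,
          ENNReal.ofReal_ofNat]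
        ring

lemma exists_setLIntegral_ewaldDecay_sq_mul_jap_rpow_diff_le [NeZero n] {s : ℝ} (hs : n < s) :
    ∃ C : ℝ≥0, ∀ η : Euc n, 1 ≤ ‖η‖ →
      ∫⁻ ξ in closedBall ((2 : ℝ)⁻¹ • η) (2 * ‖η‖) \ closedBall 0 (‖η‖ / 8),
        ENNReal.ofReal (ewaldDecay η ξ ^ 2) * ENNReal.ofReal (jap ξ ^ (1 - s)) ≤ C := by
  obtain ⟨C, hC⟩ := exists_setLIntegral_ewaldDecay_sq_le n
  have hn : (1 : ℝ) ≤ n := Nat.one_le_cast.2 (NeZero.one_le)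
  refine ⟨C * ((1 / 8 : ℝ) ^ (1 - s)).toNNReal, fun η hη ↦ ?_⟩
  have hη0 : 0 < ‖η‖ := one_pos.trans_le hη
  have hdecay := (continuous_ewaldDecay η).measurable
  have hfar (ξ : Euc n) (hξ : ξ ∉ closedBall 0 (‖η‖ / 8)) :
      jap ξ ^ (1 - s) ≤ (‖η‖ / 8) ^ (1 - s) := by
    rw [mem_closedBall_zero_iff, not_le] at hξ
    exact Real.rpow_le_rpow_of_nonpos (by positivity) (hξ.le.trans (norm_le_jap ξ)) (by linarith)
  have hpow : ‖η‖ ^ (n - 1) * (‖η‖ / 8) ^ (1 - s) ≤ (1 / 8 : ℝ) ^ (1 - s) := by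
    rw [div_eq_mul_one_div, Real.mul_rpow hη0.le (by norm_num), ← mul_assoc, ← Real.rpow_natCast,
      ← Real.rpow_add hη0, Nat.cast_pred (NeZero.pos n)]
    exact mul_le_of_le_one_left (by positivity)
      (Real.rpow_le_one_of_one_le_of_nonpos hη (by linarith))
  calc _ ≤ ∫⁻ ξ in closedBall ((2 : ℝ)⁻¹ • η) (2 * ‖η‖) \ closedBall 0 (‖η‖ / 8),
          ENNReal.ofReal (ewaldDecay η ξ ^ 2) * ENNReal.ofReal ((‖η‖ / 8) ^ (1 - s)) :=
        setLIntegral_mono (by fun_prop) fun ξ hξ ↦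
          mul_le_mul_right (ENNReal.ofReal_le_ofReal (hfar ξ hξ.2)) _
    _ ≤ C * ENNReal.ofReal (‖η‖ ^ (n - 1)) * ENNReal.ofReal ((‖η‖ / 8) ^ (1 - s)) := by
        rw [lintegral_mul_const' _ _ ENNReal.ofReal_ne_top]
        gcongr
        exact (lintegral_mono_set sdiff_subset).trans (hC η)
    _ ≤ _ := by
        rw [mul_assoc, ← ENNReal.ofReal_mul (by positivity), ENNReal.coe_mul]
        gcongr
        exact ENNReal.ofReal_le_ofReal hpow

lemma jap_le_four_mul_jap {η ξ : Euc n} (hξ : ξ ∈ closedBall ((2 : ℝ)⁻¹ • η) (2 * ‖η‖)) :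
    jap ξ ≤ 4 * jap η := by
  have hnorm : ‖ξ‖ ≤ 4 * ‖η‖ := by
    linarith [mem_closedBall_iff_norm.1 hξ, norm_sub_norm_le ξ ((2 : ℝ)⁻¹ • η),
      norm_inv_two_smul η, norm_nonneg η]
  refine Real.sqrt_le_iff.2 ⟨by linarith [jap_pos η], ?_⟩
  nlinarith [jap_sq η, norm_nonneg ξ]

lemma exists_setLIntegral_ewaldDecay_mul_jap_rpow_sq_le [NeZero n] {β p : ℝ} (hp : 0 ≤ p)
    (hβp : n - 1 - 2 * β < p) : ∃ C : ℝ≥0, ∀ η : Euc n, 1 ≤ ‖η‖ →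
      ∫⁻ ξ in closedBall ((2 : ℝ)⁻¹ • η) (2 * ‖η‖),
        ENNReal.ofReal (ewaldDecay η ξ * jap ξ ^ (-β)) ^ 2 ≤ C * ENNReal.ofReal (jap η ^ p) := by
  have hs : n < 1 + p + 2 * β := by linarith
  obtain ⟨C₁, hC₁⟩ := exists_setLIntegral_ewaldDecay_sq_mul_jap_rpow_le hs
  obtain ⟨C₂, hC₂⟩ := exists_setLIntegral_ewaldDecay_sq_mul_jap_rpow_diff_le hs
  refine ⟨(C₁ + C₂) * ((4 : ℝ) ^ p).toNNReal, fun η hη ↦ ?_⟩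
  have hη0 : η ≠ 0 := norm_pos_iff.1 (one_pos.trans_le hη)
  have hdecay := (continuous_ewaldDecay η).measurable
  set D : Set (Euc n) := closedBall ((2 : ℝ)⁻¹ • η) (2 * ‖η‖)
  set s₀ : Set (Euc n) := closedBall 0 (‖η‖ / 8)
  set k : Euc n → ℝ≥0∞ := fun ξ ↦ ENNReal.ofReal (ewaldDecay η ξ ^ 2) *
    ENNReal.ofReal (jap ξ ^ (1 - (1 + p + 2 * β))) with hk
  have hkm : Measurable k := by fun_prop
  have hpt (ξ : Euc n) (hξ : ξ ∈ D) : ENNReal.ofReal (ewaldDecay η ξ * jap ξ ^ (-β)) ^ 2 ≤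
      k ξ * ENNReal.ofReal ((4 * jap η) ^ p) := by
    have hJ := jap_pos ξ
    have hjap := jap_le_four_mul_jap hξ
    have hexp : (jap ξ ^ (-β)) ^ 2 = jap ξ ^ (1 - (1 + p + 2 * β)) * jap ξ ^ p := by
      rw [← Real.rpow_natCast, ← Real.rpow_mul hJ.le, ← Real.rpow_add hJ]
      congr 1
      push_cast
      ring
    rw [hk, ← ENNReal.ofReal_pow (mul_nonneg (ewaldDecay_nonneg η ξ) (by positivity)), mul_pow,
      hexp, ← mul_assoc, ENNReal.ofReal_mul (by positivity), ENNReal.ofReal_mul (by positivity)]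
    gcongr
  calc _ ≤ ∫⁻ ξ in s₀ ∪ D \ s₀, k ξ * ENNReal.ofReal ((4 * jap η) ^ p) := by
        refine (setLIntegral_mono (by fun_prop) hpt).trans (lintegral_mono_set ?_)
        rw [union_sdiff_self]
        exact subset_union_right
    _ ≤ (C₁ + C₂) * ENNReal.ofReal ((4 * jap η) ^ p) := by
        rw [lintegral_mul_const' _ _ ENNReal.ofReal_ne_top]
        gcongr
        exact (lintegral_union_le _ _ _).trans (add_le_add (hC₁ η hη0) (hC₂ η hη))
    _ = _ := by
        rw [Real.mul_rpow (by norm_num) (jap_pos η).le, ENNReal.ofReal_mul (by positivity)]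
        push_cast
        rw [← mul_assoc]
        rfl

end EwaldDecay

section ConvolutionEstimate

variable {n : ℕ} {β : ℝ} {E : Euc n → ℝ}

lemma sq_lintegral_mul_le {X : Type*} [MeasurableSpace X] (μ : Measure X) {f g : X → ℝ≥0∞}
    (hf : AEMeasurable f μ) (hg : AEMeasurable g μ) :
    (∫⁻ x, f x * g x ∂μ) ^ 2 ≤ (∫⁻ x, f x ^ 2 ∂μ) * ∫⁻ x, g x ^ 2 ∂μ := by
  have h := ENNReal.lintegral_mul_le_Lp_mul_Lq μ Real.HolderConjugate.two_two hf hg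
  simp only [ENNReal.rpow_two] at h
  have hsq (a : ℝ≥0∞) : (a ^ (1 / 2 : ℝ)) ^ 2 = a := by
    rw [← ENNReal.rpow_mul_natCast]; norm_num
  calc _ ≤ _ := pow_le_pow_left' h 2
    _ = _ := by rw [mul_pow, hsq, hsq]

lemma ennreal_add_sq_le (a b : ℝ≥0∞) : (a + b) ^ 2 ≤ 2 * (a ^ 2 + b ^ 2) := by
  simpa [show (2 : ℝ) - 1 = 1 by norm_num] using
    ENNReal.rpow_add_le_mul_rpow_add_rpow a b one_le_two

lemma rpow_neg_mul_rpow_neg_le {a b c : ℝ} (ha : 0 < a) (hb : 0 < b) (hc : 0 < c)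
    (habc : c ≤ a + b) (hβ : 0 ≤ β) :
    a ^ (-β) * b ^ (-β) ≤ (c / 2) ^ (-β) * (a ^ (-β) + b ^ (-β)) := by
  wlog hab : a ≤ b generalizing a b
  · rw [mul_comm, add_comm (a ^ (-β))]
    exact this hb ha (by linarith) (le_of_not_ge hab)
  have hmax : b ^ (-β) ≤ (c / 2) ^ (-β) :=
    Real.rpow_le_rpow_of_nonpos (by positivity) (by linarith) (by linarith)
  calc a ^ (-β) * b ^ (-β) ≤ a ^ (-β) * (c / 2) ^ (-β) := by gcongr
    _ = (c / 2) ^ (-β) * a ^ (-β) := mul_comm _ _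
    _ ≤ _ := by gcongr; exact le_add_of_nonneg_right (by positivity)

lemma jap_rpow_neg_mul_jap_rpow_neg_le (hβ : 0 ≤ β) (η ξ : Euc n) :
    jap ξ ^ (-β) * jap (η - ξ) ^ (-β) ≤
      (jap η / 2) ^ (-β) * (jap ξ ^ (-β) + jap (η - ξ) ^ (-β)) := by
  refine rpow_neg_mul_rpow_neg_le (jap_pos ξ) (jap_pos _) (jap_pos η) ?_ hβ
  have h := jap_sub_le ξ (ξ - η)
  rw [sub_sub_cancel, norm_sub_rev] at h
  linarith [norm_le_jap (η - ξ)]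

lemma ewaldDecay_sub_self (η ξ : Euc n) : ewaldDecay η (η - ξ) = ewaldDecay η ξ := by
  rw [ewaldDecay, ewaldDecay, ← norm_neg, neg_sub, show (2 : ℝ)⁻¹ • η - (η - ξ) =
    ξ - (2 : ℝ)⁻¹ • η by module]

lemma ewaldDecay_le_inv_jap {η ξ : Euc n} (hξ : 2 * ‖η‖ < ‖ξ - (2 : ℝ)⁻¹ • η‖) :
    ewaldDecay η ξ ≤ (jap η)⁻¹ := by
  refine inv_anti₀ (jap_pos η) ((jap_le_one_add_norm η).trans ?_)
  linarith [le_abs_self (‖ξ - (2 : ℝ)⁻¹ • η‖ - ‖η‖ / 2), norm_nonneg η]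

lemma setLIntegral_closedBall_half_sub_left (f : Euc n → ℝ≥0∞) (hf : Measurable f) (η : Euc n)
    (r : ℝ) : ∫⁻ ξ in closedBall ((2 : ℝ)⁻¹ • η) r, f (η - ξ) =
      ∫⁻ ξ in closedBall ((2 : ℝ)⁻¹ • η) r, f ξ := by
  have hpre : (η - ·) ⁻¹' closedBall ((2 : ℝ)⁻¹ • η) r = closedBall ((2 : ℝ)⁻¹ • η) r := by
    ext ξ
    rw [mem_preimage, mem_closedBall_iff_norm, mem_closedBall_iff_norm', show
      η - ξ - (2 : ℝ)⁻¹ • η = (2 : ℝ)⁻¹ • η - ξ by module]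
  nth_rw 1 [← hpre]
  exact (Measure.measurePreserving_sub_left volume η).setLIntegral_comp_preimage
    measurableSet_closedBall hf

lemma setLIntegral_closedBall_ewaldConvolution_le (hβ : 0 ≤ β) (hE : Measurable E) (η : Euc n) :
    ∫⁻ ξ in closedBall ((2 : ℝ)⁻¹ • η) (2 * ‖η‖),
        ENNReal.ofReal (ewaldDecay η ξ * (jap ξ ^ (-β) * jap (η - ξ) ^ (-β))) *
          (‖E ξ‖ₑ * ‖E (η - ξ)‖ₑ) ≤
      2 * ENNReal.ofReal ((jap η / 2) ^ (-β)) *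
        ∫⁻ ξ in closedBall ((2 : ℝ)⁻¹ • η) (2 * ‖η‖),
          ENNReal.ofReal (ewaldDecay η ξ * jap ξ ^ (-β)) * (‖E ξ‖ₑ * ‖E (η - ξ)‖ₑ) := by
  have hdecay := (continuous_ewaldDecay η).measurable
  set D : Set (Euc n) := closedBall ((2 : ℝ)⁻¹ • η) (2 * ‖η‖)
  set k : Euc n → ℝ≥0∞ := fun ξ ↦
    ENNReal.ofReal (ewaldDecay η ξ * jap ξ ^ (-β)) * (‖E ξ‖ₑ * ‖E (η - ξ)‖ₑ) with hk
  have hkm : Measurable k := by fun_prop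
  have hpt (ξ : Euc n) :
      ENNReal.ofReal (ewaldDecay η ξ * (jap ξ ^ (-β) * jap (η - ξ) ^ (-β))) *
        (‖E ξ‖ₑ * ‖E (η - ξ)‖ₑ) ≤ ENNReal.ofReal ((jap η / 2) ^ (-β)) * (k ξ + k (η - ξ)) := by
    have hd := ewaldDecay_nonneg η ξ
    have hJ := jap_pos ξ
    have hJ' := jap_pos (η - ξ)
    have hJη := jap_pos η
    simp only [hk]
    rw [ewaldDecay_sub_self, sub_sub_cancel, mul_comm ‖E (η - ξ)‖ₑ, ← add_mul,
      ← ENNReal.ofReal_add (by positivity) (by positivity),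
      ← mul_assoc (ENNReal.ofReal ((jap η / 2) ^ (-β))),
      ← ENNReal.ofReal_mul (by positivity)]
    refine mul_le_mul_left (ENNReal.ofReal_le_ofReal ?_) _
    calc _ ≤ ewaldDecay η ξ *
          ((jap η / 2) ^ (-β) * (jap ξ ^ (-β) + jap (η - ξ) ^ (-β))) := by
          exact mul_le_mul_of_nonneg_left (jap_rpow_neg_mul_jap_rpow_neg_le hβ η ξ) hd
      _ = _ := by ring
  calc _ ≤ ∫⁻ ξ in D, ENNReal.ofReal ((jap η / 2) ^ (-β)) * (k ξ + k (η - ξ)) :=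
        lintegral_mono hpt
    _ = _ := by
        rw [lintegral_const_mul' _ _ ENNReal.ofReal_ne_top, lintegral_add_left hkm,
          setLIntegral_closedBall_half_sub_left k hkm]
        ring

lemma ewaldDecay_mul_jap_rpow_mul_jap_rpow_le (hβ : 0 ≤ β) {η ξ : Euc n}
    (hξ : 2 * ‖η‖ < ‖ξ - (2 : ℝ)⁻¹ • η‖) :
    ewaldDecay η ξ * (jap ξ ^ (-β) * jap (η - ξ) ^ (-β)) ≤ jap η ^ (-1 - 2 * β) := by
  have hJ := jap_pos η
  have hfar (ζ : Euc n) (hζ : 2 * ‖η‖ < ‖ζ - (2 : ℝ)⁻¹ • η‖) : jap ζ ^ (-β) ≤ jap η ^ (-β) :=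
    Real.rpow_le_rpow_of_nonpos hJ (jap_le_jap (by
      linarith [norm_sub_le ζ ((2 : ℝ)⁻¹ • η), norm_inv_two_smul η, norm_nonneg η])) (by linarith)
  have hξ' : 2 * ‖η‖ < ‖η - ξ - (2 : ℝ)⁻¹ • η‖ := by
    rwa [show η - ξ - (2 : ℝ)⁻¹ • η = (2 : ℝ)⁻¹ • η - ξ by module, norm_sub_rev]
  calc _ ≤ (jap η)⁻¹ * (jap η ^ (-β) * jap η ^ (-β)) := by
        have := jap_pos ξ
        have := jap_pos (η - ξ)
        exact mul_le_mul (ewaldDecay_le_inv_jap hξ) (mul_le_mul (hfar ξ hξ) (hfar _ hξ')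
          (by positivity) (by positivity)) (by positivity) (by positivity)
    _ = _ := by
        rw [← Real.rpow_neg_one, ← Real.rpow_add hJ, ← Real.rpow_add hJ]
        ring_nf

lemma ewaldConvolution_le (hβ : 0 ≤ β) (hE : Measurable E) (η : Euc n) :
    ewaldConvolution (fun ξ ↦ jap ξ ^ (-β) * E ξ) η ≤
      2 * ENNReal.ofReal ((jap η / 2) ^ (-β)) *
        (∫⁻ ξ in closedBall ((2 : ℝ)⁻¹ • η) (2 * ‖η‖),
          ENNReal.ofReal (ewaldDecay η ξ * jap ξ ^ (-β)) * (‖E ξ‖ₑ * ‖E (η - ξ)‖ₑ)) +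
      ENNReal.ofReal (jap η ^ (-1 - 2 * β)) * ∫⁻ ξ, ‖E ξ‖ₑ * ‖E (η - ξ)‖ₑ := by
  set D : Set (Euc n) := closedBall ((2 : ℝ)⁻¹ • η) (2 * ‖η‖)
  set k : Euc n → ℝ≥0∞ := fun ξ ↦
    ENNReal.ofReal (ewaldDecay η ξ * (jap ξ ^ (-β) * jap (η - ξ) ^ (-β))) *
      (‖E ξ‖ₑ * ‖E (η - ξ)‖ₑ)
  have hpt (ξ : Euc n) : ENNReal.ofReal
      (ewaldDecay η ξ * (jap ξ ^ (-β) * E ξ * (jap (η - ξ) ^ (-β) * E (η - ξ)))) ≤ k ξ := by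
    have hd := ewaldDecay_nonneg η ξ
    have hJ := jap_pos ξ
    have hJ' := jap_pos (η - ξ)
    rw [mul_mul_mul_comm, ← mul_assoc, ENNReal.ofReal_mul (by positivity)]
    simp only [k, ← enorm_mul]
    gcongr
    exact Real.ofReal_le_enorm _
  have hfar : ∫⁻ ξ in Dᶜ, k ξ ≤
      ENNReal.ofReal (jap η ^ (-1 - 2 * β)) * ∫⁻ ξ, ‖E ξ‖ₑ * ‖E (η - ξ)‖ₑ := by
    rw [← lintegral_const_mul' _ _ ENNReal.ofReal_ne_top]
    refine (setLIntegral_mono (by fun_prop) fun ξ hξ ↦ ?_).trans (setLIntegral_le_lintegral Dᶜ _)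
    rw [mem_compl_iff, mem_closedBall_iff_norm, not_le] at hξ
    exact mul_le_mul_left
      (ENNReal.ofReal_le_ofReal (ewaldDecay_mul_jap_rpow_mul_jap_rpow_le hβ hξ)) _
  calc ewaldConvolution (fun ξ ↦ jap ξ ^ (-β) * E ξ) η ≤ ∫⁻ ξ, k ξ := lintegral_mono hpt
    _ = (∫⁻ ξ in D, k ξ) + ∫⁻ ξ in Dᶜ, k ξ :=
        (lintegral_add_compl k measurableSet_closedBall).symm
    _ ≤ _ := add_le_add (setLIntegral_closedBall_ewaldConvolution_le hβ hE η) hfar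

lemma half_rpow_neg_sq_mul_rpow {a : ℝ} (ha : 0 < a) (b p : ℝ) :
    ((a / 2) ^ (-b)) ^ 2 * a ^ p = 4 ^ b * a ^ (p - 2 * b) := by
  rw [Real.div_rpow ha.le zero_le_two, div_pow, ← Real.rpow_mul_natCast ha.le,
    ← Real.rpow_mul_natCast zero_le_two, show (4 : ℝ) = 2 ^ (2 : ℝ) by norm_num,
    ← Real.rpow_mul zero_le_two, div_mul_eq_mul_div, ← Real.rpow_add ha, div_eq_mul_inv,
    ← Real.rpow_neg zero_le_two, mul_comm]
  push_cast
  ring_nf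

lemma exists_ewaldConvolution_sq_le [NeZero n] (hβ : 0 ≤ β) {p : ℝ} (hp : 0 ≤ p)
    (hβp : n - 1 - 2 * β < p) : ∃ C : ℝ≥0, ∀ E : Euc n → ℝ, Measurable E → ∀ η, 1 ≤ ‖η‖ →
      ewaldConvolution (fun ξ ↦ jap ξ ^ (-β) * E ξ) η ^ 2 ≤
        C * ENNReal.ofReal (jap η ^ (p - 2 * β)) * (∫⁻ ξ, ‖E ξ‖ₑ ^ 2 * ‖E (η - ξ)‖ₑ ^ 2) +
        2 * ENNReal.ofReal (jap η ^ (-2 - 4 * β)) * (∫⁻ ξ, ‖E ξ‖ₑ ^ 2) ^ 2 := by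
  obtain ⟨C, hC⟩ := exists_setLIntegral_ewaldDecay_mul_jap_rpow_sq_le hp hβp
  refine ⟨8 * ((4 : ℝ) ^ β).toNNReal * C, fun E hE η hη ↦ ?_⟩
  have hdecay := (continuous_ewaldDecay η).measurable
  have hJ := jap_pos η
  set Q := ∫⁻ ξ, ‖E ξ‖ₑ ^ 2 * ‖E (η - ξ)‖ₑ ^ 2
  have hnear : (∫⁻ ξ in closedBall ((2 : ℝ)⁻¹ • η) (2 * ‖η‖),
      ENNReal.ofReal (ewaldDecay η ξ * jap ξ ^ (-β)) * (‖E ξ‖ₑ * ‖E (η - ξ)‖ₑ)) ^ 2 ≤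
        C * ENNReal.ofReal (jap η ^ p) * Q := by
    refine (sq_lintegral_mul_le _ (by fun_prop) (by fun_prop)).trans (mul_le_mul' (hC η hη) ?_)
    simp only [mul_pow]
    exact setLIntegral_le_lintegral _ _
  have hfar : (∫⁻ ξ, ‖E ξ‖ₑ * ‖E (η - ξ)‖ₑ) ^ 2 ≤ (∫⁻ ξ, ‖E ξ‖ₑ ^ 2) ^ 2 := by
    refine (sq_lintegral_mul_le _ (by fun_prop) (by fun_prop)).trans_eq ?_
    rw [lintegral_sub_left_eq_self (fun ξ ↦ ‖E ξ‖ₑ ^ 2), sq]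
  have hfar_rpow : (jap η ^ (-1 - 2 * β)) ^ 2 = jap η ^ (-2 - 4 * β) := by
    rw [← Real.rpow_mul_natCast hJ.le]
    push_cast
    ring_nf
  calc _ ≤ _ := pow_le_pow_left' (ewaldConvolution_le hβ hE η) 2
    _ ≤ _ := ennreal_add_sq_le _ _
    _ ≤ 2 * ((2 * ENNReal.ofReal ((jap η / 2) ^ (-β))) ^ 2 *
          (C * ENNReal.ofReal (jap η ^ p) * Q) +
        ENNReal.ofReal (jap η ^ (-1 - 2 * β)) ^ 2 * (∫⁻ ξ, ‖E ξ‖ₑ ^ 2) ^ 2) := by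
        rw [mul_pow (2 * _), mul_pow (ENNReal.ofReal (jap η ^ (-1 - 2 * β)))]
        gcongr
    _ = 8 * C * ENNReal.ofReal (((jap η / 2) ^ (-β)) ^ 2 * jap η ^ p) * Q +
        2 * ENNReal.ofReal ((jap η ^ (-1 - 2 * β)) ^ 2) * (∫⁻ ξ, ‖E ξ‖ₑ ^ 2) ^ 2 := by
        rw [ENNReal.ofReal_mul (by positivity), ENNReal.ofReal_pow (by positivity),
          ENNReal.ofReal_pow (by positivity)]
        ring
    _ = _ := by
        rw [half_rpow_neg_sq_mul_rpow hJ, hfar_rpow, ENNReal.ofReal_mul (by positivity),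
          ENNReal.coe_mul, ENNReal.coe_mul, ENNReal.coe_ofNat, ENNReal.ofReal]
        ring

lemma lintegral_lintegral_mul_sub {f g : Euc n → ℝ≥0∞} (hf : Measurable f) (hg : Measurable g) :
    ∫⁻ η, (∫⁻ ξ, f ξ * g (η - ξ)) = (∫⁻ ξ, f ξ) * ∫⁻ ξ, g ξ := by
  rw [lintegral_lintegral_swap (Measurable.aemeasurable (by fun_prop)), ← lintegral_mul_const _ hf]
  refine lintegral_congr fun ξ ↦ ?_
  rw [lintegral_const_mul _ (by fun_prop), lintegral_sub_right_eq_self g]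

lemma jap_rpow_mul_inv_norm_le (α : ℝ) {η : Euc n} (hη : 1 ≤ ‖η‖) :
    jap η ^ α * ‖η‖⁻¹ ≤ 2 * jap η ^ (α - 1) := by
  have hJ := jap_pos η
  rw [Real.rpow_sub_one hJ.ne', div_eq_mul_inv, mul_left_comm]
  gcongr
  rw [← div_eq_mul_inv, inv_eq_one_div, div_le_div_iff₀ (by linarith) hJ, one_mul]
  exact jap_le_two_mul_norm hη

lemma exists_jap_rpow_mul_ewaldConvolution_sq_le [NeZero n] {α : ℝ} (hβ : 0 ≤ β)
    (hα : α < β + 1) (hαβ : α < 2 * β - (n - 3) / 2) :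
    ∃ C : ℝ≥0, ∀ E : Euc n → ℝ, Measurable E → ∀ η, 1 ≤ ‖η‖ →
      (ENNReal.ofReal (jap η ^ α * ‖η‖⁻¹) *
        ewaldConvolution (fun ξ ↦ jap ξ ^ (-β) * E ξ) η) ^ 2 ≤
        C * (∫⁻ ξ, ‖E ξ‖ₑ ^ 2 * ‖E (η - ξ)‖ₑ ^ 2) +
        8 * (∫⁻ ξ, ‖E ξ‖ₑ ^ 2) ^ 2 * ENNReal.ofReal (jap η ^ (-(4 + 4 * β - 2 * α))) := by
  obtain ⟨C, hC⟩ := exists_ewaldConvolution_sq_le (n := n) hβ (p := 2 * (1 + β - α))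
    (by linarith) (by linarith)
  refine ⟨4 * C, fun E hE η hη ↦ ?_⟩
  have hJ := jap_pos η
  have hsq : (jap η ^ (α - 1)) ^ 2 = jap η ^ (2 * α - 2) := by
    rw [← Real.rpow_mul_natCast hJ.le]
    push_cast
    ring_nf
  have hnear : (jap η ^ (α - 1)) ^ 2 * jap η ^ (2 * (1 + β - α) - 2 * β) = 1 := by
    rw [hsq, ← Real.rpow_add hJ]
    ring_nf
    exact Real.rpow_zero _
  have hfar : (jap η ^ (α - 1)) ^ 2 * jap η ^ (-2 - 4 * β) =
      jap η ^ (-(4 + 4 * β - 2 * α)) := by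
    rw [hsq, ← Real.rpow_add hJ]
    ring_nf
  calc _ ≤ ENNReal.ofReal (2 * jap η ^ (α - 1)) ^ 2 *
        ewaldConvolution (fun ξ ↦ jap ξ ^ (-β) * E ξ) η ^ 2 := by
        rw [← mul_pow]
        exact pow_le_pow_left' (mul_le_mul_left
          (ENNReal.ofReal_le_ofReal (jap_rpow_mul_inv_norm_le α hη)) _) 2
    _ ≤ ENNReal.ofReal (2 * jap η ^ (α - 1)) ^ 2 * _ := mul_le_mul_right (hC E hE η hη) _
    _ = 4 * C * ENNReal.ofReal ((jap η ^ (α - 1)) ^ 2 * jap η ^ (2 * (1 + β - α) - 2 * β)) *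
          (∫⁻ ξ, ‖E ξ‖ₑ ^ 2 * ‖E (η - ξ)‖ₑ ^ 2) +
        8 * (∫⁻ ξ, ‖E ξ‖ₑ ^ 2) ^ 2 *
          ENNReal.ofReal ((jap η ^ (α - 1)) ^ 2 * jap η ^ (-2 - 4 * β)) := by
        rw [ENNReal.ofReal_mul zero_le_two, ENNReal.ofReal_ofNat,
          ENNReal.ofReal_mul (by positivity), ENNReal.ofReal_mul (by positivity),
          ENNReal.ofReal_pow (by positivity)]
        ring
    _ = _ := by
        rw [hnear, hfar, ENNReal.ofReal_one, mul_one, ENNReal.coe_mul, ENNReal.coe_ofNat]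

lemma exists_setLIntegral_ewaldConvolution_sq_le [NeZero n] {α : ℝ} (hβ : 0 ≤ β)
    (hα : α < β + 1) (hαβ : α < 2 * β - (n - 3) / 2) : ∃ C : ℝ≥0, ∀ E : Euc n → ℝ,
      Measurable E → ∫⁻ η in {η | 1 ≤ ‖η‖}, (ENNReal.ofReal (jap η ^ α * ‖η‖⁻¹) *
        ewaldConvolution (fun ξ ↦ jap ξ ^ (-β) * E ξ) η) ^ 2 ≤ C * (∫⁻ ξ, ‖E ξ‖ₑ ^ 2) ^ 2 := by
  obtain ⟨C, hC⟩ := exists_jap_rpow_mul_ewaldConvolution_sq_le (n := n) hβ hα hαβ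
  set I := ∫⁻ η : Euc n, ENNReal.ofReal (jap η ^ (-(4 + 4 * β - 2 * α)))
  have hI : I < ∞ := lintegral_jap_rpow_lt_top (by linarith)
  refine ⟨C + 8 * I.toNNReal, fun E hE ↦ ?_⟩
  set N := ∫⁻ ξ, ‖E ξ‖ₑ ^ 2
  set Q : Euc n → ℝ≥0∞ := fun η ↦ ∫⁻ ξ, ‖E ξ‖ₑ ^ 2 * ‖E (η - ξ)‖ₑ ^ 2
  have hQm : Measurable Q := Measurable.lintegral_prod_right (by fun_prop)
  have hQ : ∫⁻ η, Q η = N ^ 2 :=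
    (lintegral_lintegral_mul_sub (by fun_prop) (by fun_prop)).trans (sq N).symm
  calc _ ≤ ∫⁻ η, C * Q η + 8 * N ^ 2 * ENNReal.ofReal (jap η ^ (-(4 + 4 * β - 2 * α))) :=
        (setLIntegral_mono (by fun_prop) (hC E hE)).trans (setLIntegral_le_lintegral _ _)
    _ = C * N ^ 2 + 8 * N ^ 2 * I := by
        rw [lintegral_add_left (by fun_prop), lintegral_const_mul _ hQm,
          lintegral_const_mul _ (by fun_prop), hQ]
    _ = _ := by
        push_cast
        rw [ENNReal.coe_toNNReal hI.ne]
        ring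

end ConvolutionEstimate

section SobolevBound

lemma eLpNorm_two_sq {X F : Type*} [MeasurableSpace X] [NormedAddCommGroup F] (f : X → F)
    (μ : Measure X) : eLpNorm f 2 μ ^ 2 = ∫⁻ x, ‖f x‖ₑ ^ 2 ∂μ := by
  simpa using eLpNorm_nnreal_pow_eq_lintegral (f := f) (μ := μ) (p := 2) two_ne_zero

lemma memLp_jap_rpow_mul {n : ℕ} {β : ℝ} (hβ : 0 ≤ β) {E : Euc n → ℝ} (hE : MemLp E 2 volume) :
    MemLp (fun ξ ↦ jap ξ ^ (-β) * E ξ) 2 volume := by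
  refine hE.mono ((Measurable.aestronglyMeasurable (by fun_prop)).mul hE.1)
    (Eventually.of_forall fun ξ ↦ ?_)
  have hJ := jap_pos ξ
  rw [norm_mul, Real.norm_of_nonneg (by positivity)]
  exact mul_le_of_le_one_left (norm_nonneg _)
    (Real.rpow_le_one_of_one_le_of_nonpos (one_le_jap ξ) (by linarith))

lemma exists_eLpNorm_cutoff_mul_le {n : ℕ} [NeZero n] {α β : ℝ} (hβ : 0 ≤ β) (hα : α < β + 1)
    (hαβ : α < 2 * β - (n - 3) / 2) : ∃ C : ℝ≥0, ∀ (E χ : Euc n → ℝ) (F : Euc n → ℂ) (A : ℝ≥0),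
      Measurable E → (∀ ξ, |χ ξ| ≤ 1) → (∀ ξ, ‖ξ‖ < 1 → χ ξ = 0) →
      (∀ η, 1 ≤ ‖η‖ → ‖F η‖ₑ ≤ A * ENNReal.ofReal ‖η‖⁻¹ *
        ewaldConvolution (fun ξ ↦ jap ξ ^ (-β) * E ξ) η) →
      eLpNorm (fun η ↦ (jap η ^ α : ℝ) • ((χ η : ℂ) * F η)) 2 volume ≤
        C * A * eLpNorm E 2 volume ^ 2 := by
  obtain ⟨C, hC⟩ := exists_setLIntegral_ewaldConvolution_sq_le (n := n) hβ hα hαβ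
  refine ⟨NNReal.sqrt C, fun E χ F A hE hχ hχ0 hF ↦ ?_⟩
  set s : Set (Euc n) := {η | 1 ≤ ‖η‖}
  have hs : MeasurableSet s := measurableSet_le measurable_const measurable_norm
  set T : Euc n → ℝ≥0∞ := fun η ↦ ENNReal.ofReal (jap η ^ α * ‖η‖⁻¹) *
    ewaldConvolution (fun ξ ↦ jap ξ ^ (-β) * E ξ) η
  have hsupp : (fun η ↦ (jap η ^ α : ℝ) • ((χ η : ℂ) * F η)).support ⊆ s := by
    refine Function.support_subset_iff'.2 fun η hη ↦ ?_
    rw [hχ0 η (not_le.1 hη), Complex.ofReal_zero, zero_mul, smul_zero]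
  have hpt (η : Euc n) (hη : η ∈ s) : ‖(jap η ^ α : ℝ) • ((χ η : ℂ) * F η)‖ₑ ≤ A * T η := by
    have hJ := jap_pos η
    have hχη : ‖(χ η : ℂ)‖ₑ ≤ 1 := by
      rw [← ofReal_norm, Complex.norm_real]
      exact ENNReal.ofReal_le_one.2 (hχ η)
    calc _ ≤ ENNReal.ofReal (jap η ^ α) * (1 * (A * ENNReal.ofReal ‖η‖⁻¹ *
          ewaldConvolution (fun ξ ↦ jap ξ ^ (-β) * E ξ) η)) := by
          rw [enorm_smul, enorm_mul, Real.enorm_of_nonneg (by positivity)]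
          gcongr
          exact hF η hη
      _ = A * T η := by
          simp only [T]
          rw [ENNReal.ofReal_mul (by positivity)]
          ring
  rw [← eLpNorm_restrict_eq_of_support_subset hsupp, ← ENNReal.pow_le_pow_left_iff two_ne_zero,
    eLpNorm_two_sq]
  calc ∫⁻ η in s, ‖(jap η ^ α : ℝ) • ((χ η : ℂ) * F η)‖ₑ ^ 2
      ≤ ∫⁻ η in s, A ^ 2 * T η ^ 2 := setLIntegral_mono' hs fun η hη ↦ by
        rw [← mul_pow]
        exact pow_le_pow_left' (hpt η hη) 2
    _ ≤ A ^ 2 * (C * (∫⁻ ξ, ‖E ξ‖ₑ ^ 2) ^ 2) := by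
        rw [lintegral_const_mul' _ _ (by finiteness)]
        gcongr
        exact hC E hE
    _ = _ := by
        rw [← eLpNorm_two_sq, mul_pow, mul_pow, ← ENNReal.coe_pow (NNReal.sqrt C), NNReal.sq_sqrt]
        ring

theorem stmt8_general (n : ℕ) [NeZero n] (β α : ℝ) (hβ : 0 ≤ β) (hα : α < β + 1)
    (hαβ : α < 2 * β - ((n : ℝ) - 3) / 2) :
    ∃ C : ℝ, 0 < C ∧
      ∀ q : SchwartzMap (Euc n) ℂ,
        ∃ P : Euc n → ℂ,
          (∀ η : Euc n, η ≠ 0 → Tendsto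
              (fun ε : ℝ ↦ ∫ r in {r : ℝ | 0 < r ∧ ε < |1 - r|}, Sr r q η / ((1 - r : ℝ) : ℂ))
              (𝓝[>] 0) (𝓝 (P η))) ∧
          ∀ χ : Euc n → ℝ, (∀ ξ, |χ ξ| ≤ 1) → (∀ ξ, ‖ξ‖ < 1 → χ ξ = 0) →
            eLpNorm (fun η ↦ (jap η ^ α : ℝ) •
                ((χ η : ℂ) * ((Real.pi : ℂ) * Complex.I * Sr 1 q η + P η))) 2 volume
              ≤ ENNReal.ofReal C * wSobNorm β 2 q ^ 2 := by
  obtain ⟨C₁, hC₁⟩ := exists_lineMajorant_ft n β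
  obtain ⟨C₂, hC₂⟩ := exists_tendsto_Sr n
  obtain ⟨C₃, hC₃⟩ := exists_eLpNorm_cutoff_mul_le (n := n) hβ hα hαβ
  refine ⟨C₃ * C₂ * C₁ ^ 2 + 1, by positivity, fun q ↦ ?_⟩
  obtain ⟨E, hE, hE2, hEq, hmaj⟩ := hC₁ q
  have hm : Continuous fun ξ ↦ jap ξ ^ (-β) * E ξ := by
    simp only [jap_rpow]
    exact Continuous.mul (Continuous.rpow_const (by fun_prop) fun ξ ↦ .inl (by positivity)) hE
  have hft : Continuous (ft q) := by
    rw [← funext (ftSchwartz_apply q)]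
    exact (ftSchwartz q).continuous
  choose! P hP hbound using hC₂ _ q hm (memLp_jap_rpow_mul hβ hE2) hft hmaj
  refine ⟨P, hP, fun χ hχ hχ0 ↦ ?_⟩
  calc _ ≤ C₃ * C₂ * eLpNorm E 2 volume ^ 2 := by
        refine hC₃ E χ _ C₂ hE.measurable hχ hχ0 fun η hη ↦ ?_
        have hη0 : 0 < ‖η‖ := one_pos.trans_le hη
        have := hbound η (norm_pos_iff.1 hη0)
        rwa [max_eq_right hη, sq, mul_inv, mul_inv_cancel_left₀ hη0.ne'] at this
    _ ≤ C₃ * C₂ * (C₁ * wSobNorm β 2 q) ^ 2 := by gcongr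
    _ = (C₃ * C₂ * C₁ ^ 2 : ℝ≥0) * wSobNorm β 2 q ^ 2 := by push_cast; ring
    _ ≤ _ := by
        gcongr
        rw [← ENNReal.ofReal_coe_nnreal]
        exact ENNReal.ofReal_le_ofReal (by push_cast; linarith)

end SobolevBound

/-- the Sobolev bound for the double dispersion operator of backscattering:
the principal value `P(S_·(q))(η)` exists for `η ≠ 0` and
`‖⟨·⟩^α χ·(iπS₁(q) + P(S_·(q)))‖_{L²} ≤ C ‖q‖²_{W^{β,2}_2}`. -/
theorem stmt8 (n : ℕ) (hn : 2 ≤ n) (β α : ℝ) (hβ : 0 ≤ β)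
    (hrange : (((n : ℝ) - 3) / 2 < β ∧ β < ((n : ℝ) - 1) / 2 ∧
        α < 2 * β - ((n : ℝ) - 3) / 2) ∨
      (((n : ℝ) - 1) / 2 ≤ β ∧ α < β + 1))
    (C₀ : ℝ) (hC₀ : 1 ≤ C₀) (χ : Euc n → ℝ) (hχsm : ContDiff ℝ (⊤ : ℕ∞) χ)
    (hχ01 : ∀ ξ, χ ξ ∈ Set.Icc (0 : ℝ) 1)
    (hχ1 : ∀ ξ : Euc n, 2 * C₀ < ‖ξ‖ → χ ξ = 1)
    (hχ0 : ∀ ξ : Euc n, ‖ξ‖ < C₀ → χ ξ = 0) :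
    ∃ C : ℝ, 0 < C ∧
      ∀ q : SchwartzMap (Euc n) ℂ,
        ∃ P : Euc n → ℂ,
          (∀ η : Euc n, η ≠ 0 → Tendsto
              (fun ε : ℝ => ∫ r in {r : ℝ | 0 < r ∧ ε < |1 - r|},
                  Sr r (⇑q) η / ((1 - r : ℝ) : ℂ))
              (nhdsWithin 0 (Set.Ioi 0)) (nhds (P η))) ∧
          eLpNorm (fun η : Euc n => (jap η ^ α : ℝ) •
              ((χ η : ℂ) * ((Real.pi : ℂ) * Complex.I * Sr 1 (⇑q) η + P η))) 2 volume
            ≤ ENNReal.ofReal C * (wSobNorm β 2 (⇑q)) ^ 2 := by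
  have : NeZero n := ⟨by lia⟩
  obtain ⟨C, hC, h⟩ := stmt8_general n β α hβ (by rcases hrange with h | h <;> linarith)
    (by rcases hrange with h | h <;> linarith)
  refine ⟨C, hC, fun q ↦ (h q).imp fun P hP ↦ ⟨hP.1, hP.2 χ (fun ξ ↦ ?_) fun ξ hξ ↦ ?_⟩⟩
  · exact abs_le.2 ⟨by linarith [(hχ01 ξ).1], (hχ01 ξ).2⟩
  · exact hχ0 ξ (hξ.trans_le hC₀)
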